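/- Suppose λ > 0, α ∈ [0, 1/2], and Theorem: the number of pairs (i,k) ∈ ℤ × ℕ with j_{|i−α|,k} ≤ λ is strictly less than λ²/4, where j_{ν,k} denotes the k-th positive zero of the Bessel function J_ν. Equivalently, the n-th Dirichlet eigenvalue of the Aharonov–Bohm operator with flux α on the unit disk satisfies λ_n^D(𝔻, α) > 4n for all n ∈ ℕ. -/

import Mathlib

open Real

/-- The Bessel function of the first kind of real order `ν`. -/
noncomputable def besselJ (ν x : ℝ) : ℝ :=
  ∑' n : ℕ, ((-1)^n / (n.factorial * Real.Gamma (ν + n + 1))) *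
    (x / 2) ^ (2 * n) * (x / 2) ^ ν

/-- `besselZero ν k` is the `k`-th positive zero `j_{ν,k}` of `J_ν` (with `besselZero ν 0 = 0`). -/
noncomputable def besselZero (ν : ℝ) : ℕ → ℝ
  | 0 => 0
  | k + 1 => sInf {x : ℝ | besselZero ν k < x ∧ besselJ ν x = 0}

/-!
Let `N_ν(x)` count the zeros of `J_ν` in `(0, x]` and let
`θ_ν(x) = √(x² - ν²) - ν arccos(ν / x)`. Everything rests on the bound
`N_ν(x) ≤ θ_ν(x) / π + 1 / 4` for `x > ν ≥ 0`. By Sturm comparison, `θ_ν` grows by at most `π`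
between consecutive zeros, so a zero violating the bound would propagate its excess along all later
zeros `c_m → ∞`. A crude count of the zeros, obtained for `ν ≤ 3 / 2` by comparison with a cosine
and then by the step `ν ↦ ν + 1`, would confine `c_m - ν π / 2 + π / 4` to windows staying away from
`π ℤ`, whereas `J_ν(x) √x ≈ C cos(x - ν π / 2 - π / 4)` forces it to approach `π ℤ`.

It remains to count the lattice points `(i, k)` with `k ≤ θ_{|i - α|}(λ) / π + 1 / 4`. As a function
of the order, `ν ↦ θ_ν(λ) / π` is convex and decreasing with slope at least `-1 / 2`. Layer by layer
in `k`, this makes the points fewer than twice the area under its graph on `[0, λ]`, which is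
`λ² / 8`.
-/

open Set Filter Topology MeasureTheory

/-! ### Bessel functions and their power series -/

/-- The coefficients `1 / (n! Γ(ν + n + 1))` of the Bessel–Clifford function. Since `1 / Γ` has the
junk value `0` exactly where it should vanish, all recurrences hold for every real order. -/
noncomputable def besselCoeff (ν : ℝ) (n : ℕ) : ℝ :=
  (n.factorial * Gamma (ν + n + 1))⁻¹

/-- The Bessel–Clifford function `∑ yⁿ / (n! Γ(ν + n + 1))`, the entire factor of `J_ν`. -/
noncomputable def besselClifford (ν y : ℝ) : ℝ :=
  ∑' n : ℕ, besselCoeff ν n * y ^ n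

lemma inv_Gamma_eq_mul_inv_Gamma_add_one (s : ℝ) : (Gamma s)⁻¹ = s * (Gamma (s + 1))⁻¹ := by
  rcases eq_or_ne s 0 with rfl | hs
  · simp [Gamma_zero]
  · rw [Gamma_add_one hs, mul_inv, mul_inv_cancel_left₀ hs]

lemma besselCoeff_succ (ν : ℝ) (n : ℕ) :
    (n + 1) * besselCoeff ν (n + 1) = besselCoeff (ν + 1) n := by
  have harg : ν + (n + 1 : ℕ) + 1 = ν + 1 + n + 1 := by push_cast; ring
  rw [besselCoeff, besselCoeff, harg, Nat.factorial_succ]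
  push_cast
  rw [mul_assoc, mul_inv, mul_inv_cancel_left₀ (by positivity)]

lemma besselCoeff_eq_mul_add (ν : ℝ) (n : ℕ) :
    besselCoeff ν n = (ν + n + 1) * besselCoeff (ν + 1) n := by
  rw [besselCoeff, besselCoeff, mul_inv, mul_inv, inv_Gamma_eq_mul_inv_Gamma_add_one (ν + n + 1)]
  ring_nf

lemma exists_abs_inv_Gamma_le (ν : ℝ) : ∃ B, ∀ n : ℕ, |(Gamma (ν + n + 1))⁻¹| ≤ B := by
  have hanti : ∀ n ≥ ⌈-ν⌉₊,
      |(Gamma (ν + (n + 1 : ℕ) + 1))⁻¹| ≤ |(Gamma (ν + n + 1))⁻¹| := fun n hn => by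
    have hν : 1 ≤ ν + n + 1 := by linarith [Nat.ceil_le.1 hn]
    rw [inv_Gamma_eq_mul_inv_Gamma_add_one (ν + n + 1), abs_mul,
      abs_of_nonneg (zero_le_one.trans hν), Nat.cast_succ, ← add_assoc]
    exact le_mul_of_one_le_left (abs_nonneg _) hν
  have hbdd : BddAbove (range fun n : ℕ => |(Gamma (ν + n + 1))⁻¹|) := by
    refine (isBoundedUnder_of_eventually_le (a := |(Gamma (ν + ⌈-ν⌉₊ + 1))⁻¹|) <|
      (eventually_ge_atTop ⌈-ν⌉₊).mono fun n hn => ?_).bddAbove_range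
    exact antitoneOn_nat_Ici_of_succ_le (f := fun n : ℕ => |(Gamma (ν + n + 1))⁻¹|)
      hanti (mem_ofPred.2 le_rfl) hn hn
  obtain ⟨B, hB⟩ := hbdd
  exact ⟨B, fun n => hB ⟨n, rfl⟩⟩

lemma exists_abs_besselCoeff_mul_pow_le (ν : ℝ) :
    ∃ B, ∀ (n : ℕ) (y R : ℝ), |y| ≤ R → |besselCoeff ν n * y ^ n| ≤ B * (R ^ n / n.factorial) := by
  obtain ⟨B, hB⟩ := exists_abs_inv_Gamma_le ν
  refine ⟨B, fun n y R hy => ?_⟩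
  rw [besselCoeff, mul_inv, abs_mul, abs_mul, abs_pow, abs_inv, Nat.abs_cast]
  calc (n.factorial : ℝ)⁻¹ * |(Gamma (ν + n + 1))⁻¹| * |y| ^ n
      ≤ (n.factorial : ℝ)⁻¹ * B * R ^ n := by
        have hB0 : 0 ≤ B := (abs_nonneg _).trans (hB 0)
        gcongr
        exact hB n
    _ = B * (R ^ n / n.factorial) := by ring

lemma summable_besselClifford (ν y : ℝ) : Summable fun n : ℕ => besselCoeff ν n * y ^ n := by
  obtain ⟨B, hB⟩ := exists_abs_besselCoeff_mul_pow_le ν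
  exact ((summable_pow_div_factorial |y|).mul_left B).of_norm_bounded fun n => hB n y _ le_rfl

lemma hasDerivAt_besselClifford (ν y : ℝ) :
    HasDerivAt (besselClifford ν) (besselClifford (ν + 1) y) y := by
  obtain ⟨B, hB⟩ := exists_abs_besselCoeff_mul_pow_le (ν + 1)
  have hterm (n : ℕ) (z : ℝ) : HasDerivAt (fun z => besselCoeff ν (n + 1) * z ^ (n + 1))
      (besselCoeff (ν + 1) n * z ^ n) z := by
    refine ((hasDerivAt_pow (n + 1) z).const_mul _).congr_deriv ?_
    rw [← besselCoeff_succ, Nat.cast_succ, Nat.add_sub_cancel]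
    ring
  have hsplit : besselClifford ν = fun z =>
      besselCoeff ν 0 + ∑' n : ℕ, besselCoeff ν (n + 1) * z ^ (n + 1) := by
    ext z
    rw [besselClifford, (summable_besselClifford ν z).tsum_eq_zero_add, pow_zero, mul_one]
  rw [hsplit]
  exact (hasDerivAt_tsum_of_isPreconnected
    ((summable_pow_div_factorial (|y| + 1)).mul_left B) Metric.isOpen_ball
    (convex_ball (0 : ℝ) (|y| + 1)).isPreconnected (fun n z _ => hterm n z)
    (fun n z hz => hB n z _ (by simpa using (Metric.mem_ball.1 hz).le))
    (Metric.mem_ball_self (by positivity))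
    ((summable_nat_add_iff 1).2 (summable_besselClifford ν 0)) (by simp)).const_add _

lemma besselClifford_recurrence (ν y : ℝ) :
    besselClifford ν y = (ν + 1) * besselClifford (ν + 1) y + y * besselClifford (ν + 2) y := by
  have hs (μ : ℝ) := summable_besselClifford μ y
  have hterm (n : ℕ) : besselCoeff ν (n + 1) * y ^ (n + 1) =
      (ν + 1) * (besselCoeff (ν + 1) (n + 1) * y ^ (n + 1)) +
        y * (besselCoeff (ν + 2) n * y ^ n) := by
    have hcoeff := besselCoeff_succ (ν + 1) n
    rw [show ν + 1 + 1 = ν + 2 by ring] at hcoeff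
    rw [besselCoeff_eq_mul_add, ← hcoeff]
    push_cast
    ring
  have hs1 := ((summable_nat_add_iff 1).2 (hs (ν + 1))).mul_left (ν + 1)
  unfold besselClifford
  rw [(hs ν).tsum_eq_zero_add, (hs (ν + 1)).tsum_eq_zero_add, tsum_congr hterm,
    hs1.tsum_add ((hs (ν + 2)).mul_left y), tsum_mul_left, tsum_mul_left, besselCoeff_eq_mul_add ν]
  push_cast
  ring

lemma besselClifford_zero_pos {ν : ℝ} (hν : -1 < ν) : 0 < besselClifford ν 0 := by
  rw [besselClifford, tsum_eq_single 0 fun n hn => by simp [hn]]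
  have := Gamma_pos_of_pos (by linarith : 0 < ν + 1)
  simpa [besselCoeff] using this

lemma continuous_besselClifford (ν : ℝ) : Continuous (besselClifford ν) :=
  continuous_iff_continuousAt.2 fun y => (hasDerivAt_besselClifford ν y).continuousAt

lemma analyticOnNhd_besselClifford (ν : ℝ) : AnalyticOnNhd ℝ (besselClifford ν) univ := by
  set p := FormalMultilinearSeries.ofScalars ℝ (besselCoeff ν)
  have hradius : p.radius = ⊤ := by
    refine FormalMultilinearSeries.radius_eq_top_of_summable_norm _ fun r => ?_
    refine (summable_besselClifford ν r).norm.congr fun n => ?_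
    rw [FormalMultilinearSeries.ofScalars_norm, norm_mul, norm_pow,
      Real.norm_of_nonneg r.coe_nonneg]
  have hsum : p.sum = besselClifford ν := by
    ext y
    simp [p, FormalMultilinearSeries.sum, besselClifford, mul_comm]
  have hseries := p.hasFPowerSeriesOnBall (by simp [hradius])
  rw [hsum, hradius] at hseries
  exact fun y _ => hseries.analyticAt_of_mem (by simp)

lemma besselJ_eq_rpow_mul (ν x : ℝ) :
    besselJ ν x = (x / 2) ^ ν * besselClifford ν (-(x / 2) ^ 2) := by
  rw [besselJ, besselClifford, tsum_mul_right, mul_comm]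
  congr 1
  refine tsum_congr fun n => ?_
  rw [besselCoeff, neg_pow ((x / 2) ^ 2), ← pow_mul]
  ring

lemma besselJ_eq_zero_iff {ν x : ℝ} (hx : 0 < x) :
    besselJ ν x = 0 ↔ besselClifford ν (-(x / 2) ^ 2) = 0 := by
  have : (x / 2) ^ ν ≠ 0 := (rpow_pos_of_pos (half_pos hx) _).ne'
  simp [besselJ_eq_rpow_mul, this]

lemma continuous_besselJ {ν : ℝ} (hν : 0 ≤ ν) : Continuous (besselJ ν) := by
  rw [funext (besselJ_eq_rpow_mul ν)]
  exact ((continuous_id.div_const 2).rpow_const fun _ => Or.inr hν).mul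
    ((continuous_besselClifford ν).comp (by fun_prop))

lemma besselJ_recurrence (ν : ℝ) {x : ℝ} (hx : 0 < x) :
    besselJ ν x = 2 * (ν + 1) / x * besselJ (ν + 1) x - besselJ (ν + 2) x := by
  have hx2 := half_pos hx
  rw [besselJ_eq_rpow_mul, besselJ_eq_rpow_mul, besselJ_eq_rpow_mul, besselClifford_recurrence,
    rpow_add hx2, rpow_add hx2, rpow_one, rpow_two]
  field_simp
  ring

/-- The derivative of `J_ν` on `(0, ∞)`. -/
noncomputable def besselJDeriv (ν x : ℝ) : ℝ :=
  ν / x * besselJ ν x - besselJ (ν + 1) x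

lemma hasDerivAt_besselClifford_comp (ν x : ℝ) :
    HasDerivAt (fun x => besselClifford ν (-(x / 2) ^ 2))
      (-(x / 2) * besselClifford (ν + 1) (-(x / 2) ^ 2)) x := by
  have hsq : HasDerivAt (fun x : ℝ => -(x / 2) ^ 2) (-(x / 2)) x :=
    ((((hasDerivAt_id x).div_const 2).fun_pow 2).fun_neg).congr_deriv (by simp; ring)
  exact ((hasDerivAt_besselClifford ν _).comp x hsq).congr_deriv (mul_comm _ _)

lemma hasDerivAt_besselJ (ν : ℝ) {x : ℝ} (hx : 0 < x) :
    HasDerivAt (besselJ ν) (besselJDeriv ν x) x := by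
  have hx2 := half_pos hx
  have hpow := ((hasDerivAt_id x).div_const 2).rpow_const (p := ν) (Or.inl hx2.ne')
  rw [funext (besselJ_eq_rpow_mul ν)]
  refine (hpow.mul (hasDerivAt_besselClifford_comp ν x)).congr_deriv ?_
  simp only [id]
  rw [besselJDeriv, besselJ_eq_rpow_mul, besselJ_eq_rpow_mul, rpow_add hx2, rpow_sub hx2, rpow_one]
  field_simp
  ring

lemma hasDerivAt_besselJDeriv (ν : ℝ) {x : ℝ} (hx : 0 < x) :
    HasDerivAt (besselJDeriv ν)
      (-(1 / x) * besselJDeriv ν x - (1 - ν ^ 2 / x ^ 2) * besselJ ν x) x := by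
  have hquot := ((hasDerivAt_const x ν).div (hasDerivAt_id x) hx.ne').mul (hasDerivAt_besselJ ν hx)
  refine HasDerivAt.congr_deriv (f := besselJDeriv ν)
    (hquot.sub (hasDerivAt_besselJ (ν + 1) hx)) ?_
  have hrec : besselJ (ν + 1 + 1) x = 2 * (ν + 1) / x * besselJ (ν + 1) x - besselJ ν x := by
    rw [besselJ_recurrence ν hx, show ν + 1 + 1 = ν + 2 by ring]
    ring
  simp only [id, Pi.div_apply, besselJDeriv, hrec]
  field_simp
  ring

/-! ### Counting zeros -/

/-- The positive zeros of `J_ν` up to `x`. -/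
def besselZeroSet (ν x : ℝ) : Set ℝ :=
  {z ∈ Ioc 0 x | besselJ ν z = 0}

/-- The number of positive zeros of `J_ν` up to `x`; meaningful for `ν > -1`, when
`besselZeroSet ν x` is finite. -/
noncomputable def besselZeroCount (ν x : ℝ) : ℕ :=
  (besselZeroSet ν x).ncard

lemma finite_setOf_eq_zero_of_isCompact {f : ℝ → ℝ} {K : Set ℝ} (hf : AnalyticOnNhd ℝ f univ)
    (hf0 : ∃ x, f x ≠ 0) (hK : IsCompact K) : {x ∈ K | f x = 0}.Finite := by
  obtain ⟨x, hx⟩ := hf0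
  have hne := (hf.eqOn_zero_or_eventually_ne_zero_of_preconnected isPreconnected_univ).resolve_left
    fun h => hx (h (mem_univ x))
  have := hK.finite_sdiff_of_mem_codiscreteWithin (codiscreteWithin_mono (subset_univ K) hne)
  exact this.subset fun y hy => ⟨hy.1, not_not.2 hy.2⟩

lemma finite_besselZeroSet {ν : ℝ} (hν : -1 < ν) (x : ℝ) : (besselZeroSet ν x).Finite := by
  have hfin := finite_setOf_eq_zero_of_isCompact (analyticOnNhd_besselClifford ν)
    ⟨0, (besselClifford_zero_pos hν).ne'⟩ (isCompact_Icc (a := -(x / 2) ^ 2) (b := 0))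
  refine Finite.of_finite_image (f := fun z => -(z / 2) ^ 2) (hfin.subset ?_) ?_
  · rintro _ ⟨z, ⟨⟨hz0, hzx⟩, hz⟩, rfl⟩
    refine ⟨⟨?_, by simp [sq_nonneg]⟩, (besselJ_eq_zero_iff hz0).1 hz⟩
    simp only [neg_le_neg_iff]
    gcongr
  · intro y hy z hz hyz
    have : (y / 2) ^ 2 = (z / 2) ^ 2 := neg_injective hyz
    linarith [(pow_left_inj₀ (half_pos hy.1.1).le (half_pos hz.1.1).le two_ne_zero).1 this]

lemma exists_mem_Ioo_besselJ_ne_zero {ν a b : ℝ} (hν : -1 < ν) (ha : 0 ≤ a) (hab : a < b) :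
    ∃ x ∈ Ioo a b, besselJ ν x ≠ 0 := by
  by_contra! h
  exact (Ioo_infinite hab) ((finite_besselZeroSet hν b).subset fun x hx =>
    ⟨⟨ha.trans_lt hx.1, hx.2.le⟩, h x hx⟩)

lemma besselZeroCount_mono {ν : ℝ} (hν : -1 < ν) : Monotone (besselZeroCount ν) := fun _ _ hxy =>
  ncard_le_ncard (fun _ hz => ⟨⟨hz.1.1, hz.1.2.trans hxy⟩, hz.2⟩) (finite_besselZeroSet hν _)

/-! ### Sturm comparison and interlacing -/

lemma hasDerivAt_eq_zero_of_nonneg_of_eq {E E' : ℝ → ℝ} {a b : ℝ} (hE : ContinuousOn E (Icc a b))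
    (hE' : ∀ x ∈ Ioo a b, HasDerivAt E (E' x) x) (hnonneg : ∀ x ∈ Ioo a b, 0 ≤ E' x)
    (hab : E a = E b) : ∀ x ∈ Ioo a b, E' x = 0 := by
  intro x hx
  have hmono : MonotoneOn E (Icc a b) := by
    refine monotoneOn_of_deriv_nonneg (convex_Icc a b) hE ?_ ?_ <;> rw [interior_Icc]
    · exact fun y hy => (hE' y hy).differentiableAt.differentiableWithinAt
    · exact fun y hy => (hE' y hy).deriv.symm ▸ hnonneg y hy
  have hle := hx.1.le.trans hx.2.le
  have hconst : E =ᶠ[𝓝 x] fun _ => E a := by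
    filter_upwards [Icc_mem_nhds hx.1 hx.2] with y hy
    exact le_antisymm ((hmono hy (right_mem_Icc.2 hle) hy.2).trans_eq hab.symm)
      (hmono (left_mem_Icc.2 hle) hy hy.1)
  exact (hE' x hx).unique ((hasDerivAt_const x (E a)).congr_of_eventuallyEq hconst)

lemma besselJ_zero_right {ν : ℝ} (hν : ν ≠ 0) : besselJ ν 0 = 0 := by
  simp [besselJ_eq_rpow_mul, zero_rpow hν]

lemma mul_besselJDeriv (ν x : ℝ) :
    x * besselJDeriv ν x = ν * besselJ ν x - x * besselJ (ν + 1) x := by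
  rcases eq_or_ne x 0 with rfl | hx
  · rcases eq_or_ne ν 0 with rfl | hν
    · simp
    · simp [besselJ_zero_right hν]
  · rw [besselJDeriv]
    field_simp

lemma continuous_mul_besselJDeriv {ν : ℝ} (hν : 0 ≤ ν) :
    Continuous fun x => x * besselJDeriv ν x := by
  simp only [mul_besselJDeriv]
  exact ((continuous_besselJ hν).const_mul ν).sub
    (continuous_id.mul (continuous_besselJ (by positivity)))

lemma hasDerivAt_mul_besselJDeriv (ν : ℝ) {x : ℝ} (hx : 0 < x) :
    HasDerivAt (fun x => x * besselJDeriv ν x) ((ν ^ 2 / x - x) * besselJ ν x) x := by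
  refine ((hasDerivAt_id x).mul (hasDerivAt_besselJDeriv ν hx)).congr_deriv ?_
  simp only [id]
  field_simp
  ring

lemma lt_of_besselJ_eq_zero {ν z : ℝ} (hν : 0 ≤ ν) (hz : 0 < z) (hJ : besselJ ν z = 0) :
    ν < z := by
  by_contra! hzν
  have hzero := hasDerivAt_eq_zero_of_nonneg_of_eq (a := 0) (b := z)
    (E := fun x => besselJ ν x * (x * besselJDeriv ν x))
    (E' := fun x => x * besselJDeriv ν x ^ 2 + (ν ^ 2 / x - x) * besselJ ν x ^ 2)
    ((continuous_besselJ hν).mul (continuous_mul_besselJDeriv hν)).continuousOn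
    (fun x hx => ((hasDerivAt_besselJ ν hx.1).mul
      (hasDerivAt_mul_besselJDeriv ν hx.1)).congr_deriv (by ring))
    (fun x hx => by
      have : 0 ≤ ν ^ 2 / x - x := by
        rw [sub_nonneg, le_div_iff₀ hx.1]
        nlinarith [hx.1, hx.2]
      have := hx.1
      positivity)
    (by simp [hJ])
  obtain ⟨x, hx, hJx⟩ := exists_mem_Ioo_besselJ_ne_zero (by linarith : -1 < ν) le_rfl hz
  have hpos : 0 < ν ^ 2 / x - x := by
    rw [sub_pos, lt_div_iff₀ hx.1]
    nlinarith [hx.1, hx.2]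
  have := hx.1
  have : 0 < x * besselJDeriv ν x ^ 2 + (ν ^ 2 / x - x) * besselJ ν x ^ 2 := by positivity
  exact this.ne' (hzero x hx)

lemma besselZeroCount_eq_zero {ν x : ℝ} (hν : 0 ≤ ν) (hx : x ≤ ν) : besselZeroCount ν x = 0 := by
  have : besselZeroSet ν x = ∅ := eq_empty_of_forall_notMem fun z hz =>
    (lt_of_besselJ_eq_zero hν hz.1.1 hz.2).not_ge (hz.1.2.trans hx)
  rw [besselZeroCount, this, ncard_empty]

/-- The Picone form `u (u' - u v' / v)` of `u = √x J_ν` against the comparison function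
`v = cos (κ (x - m))`, written without square roots. -/
noncomputable def besselPiconeForm (ν κ m x : ℝ) : ℝ :=
  besselJ ν x * (besselJ ν x / 2 + x * besselJDeriv ν x + κ * x * tan (κ * (x - m)) * besselJ ν x)

lemma hasDerivAt_besselPiconeForm {ν κ m x : ℝ} (hx : 0 < x) (hcos : cos (κ * (x - m)) ≠ 0) :
    HasDerivAt (besselPiconeForm ν κ m)
      (((1 / 2 + κ * x * tan (κ * (x - m))) * besselJ ν x + x * besselJDeriv ν x) ^ 2 / x +
        (κ ^ 2 - 1 + (ν ^ 2 - 1 / 4) / x ^ 2) * x * besselJ ν x ^ 2) x := by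
  have hJ := hasDerivAt_besselJ ν hx
  have htan : HasDerivAt (fun x => tan (κ * (x - m))) (κ * (1 + tan (κ * (x - m)) ^ 2)) x := by
    have hlin : HasDerivAt (fun x => κ * (x - m)) κ x := by
      simpa using ((hasDerivAt_id x).sub_const m).const_mul κ
    refine ((hasDerivAt_tan hcos).comp x hlin).congr_deriv ?_
    rw [← inv_one_add_tan_sq hcos, one_div, inv_inv, mul_comm]
  refine (hJ.mul (((hJ.div_const 2).add (hasDerivAt_mul_besselJDeriv ν hx)).add
    ((((hasDerivAt_id x).const_mul κ).mul htan).mul hJ))).congr_deriv ?_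
  simp only [id, Pi.add_apply, Pi.mul_apply]
  field_simp
  ring

lemma pi_le_sub_of_besselJ_eq_zero {ν a b : ℝ} (hν : 1 / 2 ≤ ν) (ha : 0 ≤ a) (hab : a < b)
    (hJa : besselJ ν a = 0) (hJb : besselJ ν b = 0) : π ≤ b - a := by
  by_contra! hgap
  have hba := sub_pos.2 hab
  have hν0 : 0 ≤ ν := by linarith
  obtain ⟨κ, hκ1, hκ⟩ := exists_between ((one_lt_div hba).2 hgap)
  have hκπ : κ * (b - a) < π := (lt_div_iff₀ hba).1 hκ
  set m := (a + b) / 2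
  have hcos : ∀ x ∈ Icc a b, cos (κ * (x - m)) ≠ 0 := fun x hx =>
    (cos_pos_of_mem_Ioo
      ⟨by simp only [m]; nlinarith [hx.1], by simp only [m]; nlinarith [hx.2]⟩).ne'
  have hcoef : ∀ x, 0 < κ ^ 2 - 1 + (ν ^ 2 - 1 / 4) / x ^ 2 := fun x => by
    have : 0 ≤ ν ^ 2 - 1 / 4 := by nlinarith
    have : 0 ≤ (ν ^ 2 - 1 / 4) / x ^ 2 := by positivity
    nlinarith
  have hJc := continuous_besselJ hν0
  have htan : ContinuousOn (fun x => tan (κ * (x - m))) (Icc a b) :=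
    continuousOn_tan.comp (by fun_prop) hcos
  have hzero := hasDerivAt_eq_zero_of_nonneg_of_eq (E := besselPiconeForm ν κ m)
    (hJc.continuousOn.mul ((((hJc.div_const 2).add
      (continuous_mul_besselJDeriv hν0)).continuousOn).add
      (((by fun_prop : ContinuousOn (fun x : ℝ => κ * x) _).mul htan).mul hJc.continuousOn)))
    (fun x hx => hasDerivAt_besselPiconeForm (ha.trans_lt hx.1) (hcos x (Ioo_subset_Icc_self hx)))
    (fun x hx => by
      have := ha.trans_lt hx.1
      have := hcoef x
      positivity)
    (by simp [besselPiconeForm, hJa, hJb])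
  obtain ⟨x, hx, hJx⟩ := exists_mem_Ioo_besselJ_ne_zero (by linarith : -1 < ν) ha hab
  have hx0 := ha.trans_lt hx.1
  have hpos : 0 < (κ ^ 2 - 1 + (ν ^ 2 - 1 / 4) / x ^ 2) * x * besselJ ν x ^ 2 := by
    have := hcoef x
    positivity
  exact (add_pos_of_nonneg_of_pos (by positivity) hpos).ne' (hzero x hx)

lemma card_mul_le_of_separated {δ : ℝ} (s : Finset ℝ) :
    ∀ {x : ℝ}, 0 ≤ x → (∀ z ∈ s, δ ≤ z ∧ z ≤ x) → (∀ y ∈ s, ∀ z ∈ s, y < z → δ ≤ z - y) →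
      s.card * δ ≤ x := by
  induction s using Finset.induction_on_max with
  | empty => simp
  | insert c s hc ih =>
    intro x _ hs hsep
    obtain ⟨hδc, hcx⟩ := hs c (Finset.mem_insert_self c s)
    have hcard := ih (x := c - δ) (by linarith)
      (fun z hz => ⟨(hs z (Finset.mem_insert_of_mem hz)).1, by
        linarith [hsep z (Finset.mem_insert_of_mem hz) c (Finset.mem_insert_self c s) (hc z hz)]⟩)
      (fun y hy z hz => hsep y (Finset.mem_insert_of_mem hy) z (Finset.mem_insert_of_mem hz))
    rw [Finset.card_insert_of_notMem fun h => (hc c h).false]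
    push_cast
    linarith

lemma besselZeroCount_mul_pi_le {ν x : ℝ} (hν : 1 / 2 ≤ ν) (hx : 0 ≤ x) :
    besselZeroCount ν x * π ≤ x := by
  have hfin := finite_besselZeroSet (by linarith : -1 < ν) x
  rw [besselZeroCount, ncard_eq_toFinset_card _ hfin]
  refine card_mul_le_of_separated _ hx ?_ ?_ <;> simp only [Finite.mem_toFinset]
  · intro z hz
    have := pi_le_sub_of_besselJ_eq_zero hν le_rfl hz.1.1 (besselJ_zero_right (by linarith)) hz.2
    exact ⟨by linarith, hz.1.2⟩
  · exact fun y hy z hz hyz => pi_le_sub_of_besselJ_eq_zero hν hy.1.1.le hyz hy.2 hz.2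

lemma exists_finset_card_eq_of_hasDerivAt {f f' : ℝ → ℝ} {a b : ℝ} (hf : ContinuousOn f (Icc a b))
    (hf' : ∀ x ∈ Ioo a b, HasDerivAt f (f' x) x) (ha : f a = 0) (s : Finset ℝ) :
    (∀ x ∈ s, x ∈ Ioc a b ∧ f x = 0) → ∃ t : Finset ℝ,
      t.card = s.card ∧ ∀ y ∈ t, (y ∈ Ioo a b ∧ f' y = 0) ∧ ∃ x ∈ s, y < x := by
  induction s using Finset.induction_on_max with
  | empty => exact fun _ => ⟨∅, by simp⟩
  | insert c s hc ih =>
    intro hs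
    obtain ⟨t, htcard, ht⟩ := ih fun x hx => hs x (Finset.mem_insert_of_mem hx)
    obtain ⟨⟨hac, hcb⟩, hfc⟩ := hs c (Finset.mem_insert_self c s)
    set p := (insert a s).max' (Finset.insert_nonempty a s)
    have hp : p ∈ insert a s := Finset.max'_mem _ _
    obtain ⟨hap, hpc, hfp⟩ : a ≤ p ∧ p < c ∧ f p = 0 := by
      rcases Finset.mem_insert.1 hp with h | h
      · exact ⟨h.ge, h ▸ hac, h ▸ ha⟩
      · have := hs p (Finset.mem_insert_of_mem h)
        exact ⟨this.1.1.le, hc p h, this.2⟩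
    obtain ⟨y, hy, hy0⟩ := exists_hasDerivAt_eq_zero hpc (hf.mono (Icc_subset_Icc hap hcb))
      (hfp.trans hfc.symm) fun x hx => hf' x ⟨hap.trans_lt hx.1, hx.2.trans_le hcb⟩
    have hyt : y ∉ t := fun h => by
      obtain ⟨x, hx, hyx⟩ := (ht y h).2
      exact (hy.1.trans hyx).not_ge (Finset.le_max' _ _ (Finset.mem_insert_of_mem hx))
    refine ⟨insert y t, ?_, Finset.forall_mem_insert _ _ _ |>.2 ⟨⟨⟨⟨hap.trans_lt hy.1,
      hy.2.trans_le hcb⟩, hy0⟩, c, Finset.mem_insert_self c s, hy.2⟩, fun z hz => ?_⟩⟩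
    · rw [Finset.card_insert_of_notMem hyt, htcard,
        Finset.card_insert_of_notMem fun h => (hc c h).false]
    · obtain ⟨hz', x, hx, hzx⟩ := ht z hz
      exact ⟨hz', x, Finset.mem_insert_of_mem hx, hzx⟩

lemma encard_setOf_eq_zero_le_encard_hasDerivAt_eq_zero {f f' : ℝ → ℝ} {a b : ℝ}
    (hf : ContinuousOn f (Icc a b)) (hf' : ∀ x ∈ Ioo a b, HasDerivAt f (f' x) x) (ha : f a = 0) :
    {x ∈ Ioc a b | f x = 0}.encard ≤ {x ∈ Ioo a b | f' x = 0}.encard := by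
  refine ENat.forall_natCast_le_iff_le.1 fun n hn => ?_
  obtain ⟨s, hs, hsn⟩ := exists_subset_encard_eq hn
  have hsfin : s.Finite := finite_of_encard_eq_coe hsn
  obtain ⟨t, htcard, ht⟩ := exists_finset_card_eq_of_hasDerivAt hf hf' ha hsfin.toFinset
    fun x hx => hs (hsfin.mem_toFinset.1 hx)
  rw [← hsn, ← hsfin.coe_toFinset, encard_coe_eq_coe_finsetCard, ← htcard,
    ← encard_coe_eq_coe_finsetCard]
  exact encard_le_encard fun y hy => (ht y hy).1

lemma hasDerivAt_rpow_mul_besselJ (ν : ℝ) {x : ℝ} (hx : 0 < x) :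
    HasDerivAt (fun x => x ^ (ν + 1) * besselJ (ν + 1) x) (x ^ (ν + 1) * besselJ ν x) x := by
  refine ((hasDerivAt_rpow_const (Or.inl hx.ne')).mul
    (hasDerivAt_besselJ (ν + 1) hx)).congr_deriv ?_
  rw [besselJ_recurrence ν hx, besselJDeriv, rpow_sub_one hx.ne',
    show ν + 1 + 1 = ν + 2 by ring]
  field_simp
  ring

lemma besselZeroCount_add_one_le {ν : ℝ} (hν : -1 < ν) (x : ℝ) :
    besselZeroCount (ν + 1) x ≤ besselZeroCount ν x := by
  have hν1 : 0 < ν + 1 := by linarith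
  have hle := encard_setOf_eq_zero_le_encard_hasDerivAt_eq_zero (a := 0) (b := x)
    ((continuous_rpow_const hν1.le).mul (continuous_besselJ hν1.le)).continuousOn
    (fun x hx => hasDerivAt_rpow_mul_besselJ ν hx.1) (by simp [zero_rpow hν1.ne'])
  rw [← Nat.cast_le (α := ℕ∞), besselZeroCount, besselZeroCount,
    (finite_besselZeroSet (by linarith) x).cast_ncard_eq, (finite_besselZeroSet hν x).cast_ncard_eq]
  refine (encard_le_encard fun z hz => ?_).trans (hle.trans (encard_le_encard fun z hz => ?_))
  · exact ⟨hz.1, by simp [hz.2]⟩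
  · exact ⟨Ioo_subset_Ioc_self hz.1,
      (mul_eq_zero.1 hz.2).resolve_left (rpow_pos_of_pos hz.1.1 _).ne'⟩

lemma besselZeroCount_le_add_one {ν : ℝ} (hν : -1 < ν) (x : ℝ) :
    besselZeroCount ν x ≤ besselZeroCount (ν + 1) x + 1 := by
  have hfin := finite_besselZeroSet hν x
  have hfin1 := finite_besselZeroSet (by linarith : -1 < ν + 1) x
  rcases (besselZeroSet ν x).eq_empty_or_nonempty with hempty | hne
  · simp [besselZeroCount, hempty]
  obtain ⟨z₀, hz₀, hmin⟩ := exists_min_image _ id hfin hne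
  have hle := encard_setOf_eq_zero_le_encard_hasDerivAt_eq_zero (a := z₀) (b := x)
    ((continuous_besselClifford ν).comp (by fun_prop : Continuous fun x : ℝ => -(x / 2) ^ 2)
      |>.continuousOn)
    (fun x _ => hasDerivAt_besselClifford_comp ν x) ((besselJ_eq_zero_iff hz₀.1.1).1 hz₀.2)
  have hsub : besselZeroSet ν x ⊆
      insert z₀ {z ∈ Ioc z₀ x | besselClifford ν (-(z / 2) ^ 2) = 0} := fun z hz => by
    rcases eq_or_lt_of_le (hmin z hz) with h | h
    · exact Or.inl h.symm
    · exact Or.inr ⟨⟨h, hz.1.2⟩, (besselJ_eq_zero_iff hz.1.1).1 hz.2⟩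
  have hsub1 : {z ∈ Ioo z₀ x | -(z / 2) * besselClifford (ν + 1) (-(z / 2) ^ 2) = 0} ⊆
      besselZeroSet (ν + 1) x := fun z ⟨hz, hz0⟩ => by
    have hzpos := hz₀.1.1.trans hz.1
    exact ⟨⟨hzpos, hz.2.le⟩, (besselJ_eq_zero_iff hzpos).2
      ((mul_eq_zero.1 hz0).resolve_left (neg_ne_zero.2 (half_pos hzpos).ne'))⟩
  rw [← Nat.cast_le (α := ℕ∞), Nat.cast_succ, besselZeroCount, besselZeroCount,
    hfin.cast_ncard_eq, hfin1.cast_ncard_eq]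
  calc (besselZeroSet ν x).encard
      ≤ {z ∈ Ioc z₀ x | besselClifford ν (-(z / 2) ^ 2) = 0}.encard + 1 :=
        (encard_le_encard hsub).trans (encard_insert_le _ _)
    _ ≤ (besselZeroSet (ν + 1) x).encard + 1 := by
        exact add_le_add_left (hle.trans (encard_le_encard hsub1)) 1

/-! ### The phase function and the distance between consecutive zeros -/

/-- The WKB phase `√(x² - ν²) - ν arccos (ν / x)` of `J_ν` on `(ν, ∞)`. -/
noncomputable def besselPhase (ν x : ℝ) : ℝ :=
  √(x ^ 2 - ν ^ 2) - ν * arccos (ν / x)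

lemma sqrt_one_sub_div_sq {ν x : ℝ} (hx : 0 < x) :
    √(1 - (ν / x) ^ 2) = √(x ^ 2 - ν ^ 2) / x := by
  rw [← sqrt_sq hx.le, ← sqrt_div' _ (sq_nonneg x), sqrt_sq hx.le]
  congr 1
  field_simp

lemma hasDerivAt_besselPhase {ν x : ℝ} (hν : 0 ≤ ν) (hx : ν < x) :
    HasDerivAt (besselPhase ν) (√(x ^ 2 - ν ^ 2) / x) x := by
  have hx0 : 0 < x := hν.trans_lt hx
  have hF : 0 < x ^ 2 - ν ^ 2 := by nlinarith
  have hr2 : √(x ^ 2 - ν ^ 2) ^ 2 = x ^ 2 - ν ^ 2 := sq_sqrt hF.le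
  have hdiv : HasDerivAt (fun x : ℝ => ν / x) (-ν / x ^ 2) x :=
    ((hasDerivAt_const x ν).div (hasDerivAt_id x) hx0.ne').congr_deriv (by simp)
  have hlt : ν / x < 1 := (div_lt_one hx0).2 hx
  have hnonneg : 0 ≤ ν / x := by positivity
  have harccos := (hasDerivAt_arccos (by linarith) hlt.ne).comp x hdiv
  refine ((((hasDerivAt_pow 2 x).sub_const (ν ^ 2)).sqrt hF.ne').sub
    (harccos.const_mul ν)).congr_deriv ?_
  rw [sqrt_one_sub_div_sq hx0]
  push_cast
  field_simp
  rw [hr2]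

lemma one_le_cos_add_mul_sin {β : ℝ} (h0 : 0 ≤ β) (h1 : β ≤ π / 2) :
    1 ≤ cos β + β * sin β := by
  have hπ : 1 / 2 ≤ 2 / π := by
    rw [div_le_div_iff₀ two_pos pi_pos]
    linarith [pi_le_four]
  nlinarith [one_sub_sq_div_two_le_cos (x := β), mul_le_mul_of_nonneg_left (mul_le_sin h0 h1) h0,
    mul_le_mul_of_nonneg_right hπ (sq_nonneg β)]

lemma sub_le_besselPhase {ν x : ℝ} (hν : 0 ≤ ν) (hx : ν < x) :
    x - ν * (π / 2) ≤ besselPhase ν x := by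
  have hx0 : 0 < x := hν.trans_lt hx
  set β := arcsin (ν / x)
  have hsin : x * sin β = ν := by
    rw [sin_arcsin (by linarith [div_nonneg hν hx0.le]) ((div_le_one hx0).2 hx.le)]
    field_simp
  have hcos : x * cos β = √(x ^ 2 - ν ^ 2) := by
    rw [cos_arcsin, sqrt_one_sub_div_sq hx0]
    field_simp
  have h := mul_le_mul_of_nonneg_left (one_le_cos_add_mul_sin (β := β)
    (arcsin_nonneg.2 (div_nonneg hν hx0.le)) (arcsin_le_pi_div_two _)) hx0.le
  calc x - ν * (π / 2) ≤ x * (cos β + β * sin β) - ν * (π / 2) := by linarith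
    _ = x * cos β + (x * sin β) * β - ν * (π / 2) := by ring
    _ = besselPhase ν x := by rw [hcos, hsin, besselPhase, arccos]; ring

lemma monotoneOn_besselPhase {ν : ℝ} (hν : 0 ≤ ν) : MonotoneOn (besselPhase ν) (Ioi ν) := by
  refine monotoneOn_of_hasDerivWithinAt_nonneg (f' := fun x => √(x ^ 2 - ν ^ 2) / x)
    (convex_Ioi ν) (fun x hx => (hasDerivAt_besselPhase hν hx).continuousAt.continuousWithinAt)
    ?_ ?_ <;> rw [interior_Ioi]
  · exact fun x hx => (hasDerivAt_besselPhase hν hx).hasDerivWithinAt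
  · exact fun x hx => div_nonneg (sqrt_nonneg _) (hν.trans hx.le)

/-- The Wronskian of `(x² - ν²)^(1/4) J_ν(x)` and `sin (θ_ν(x) - a)` with respect to the phase
`θ_ν`. -/
noncomputable def phaseWronskian (ν a x : ℝ) : ℝ :=
  (x ^ 2 - ν ^ 2) ^ (-(1 / 4) : ℝ) *
    ((x ^ 2 / (2 * (x ^ 2 - ν ^ 2)) * besselJ ν x + x * besselJDeriv ν x) *
        sin (besselPhase ν x - a) -
      √(x ^ 2 - ν ^ 2) * besselJ ν x * cos (besselPhase ν x - a))

lemma hasDerivAt_phaseWronskian {ν x : ℝ} (hν : 0 ≤ ν) (hx : ν < x) (a : ℝ) :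
    HasDerivAt (phaseWronskian ν a)
      (-((x ^ 2 - ν ^ 2) ^ (-(1 / 4) : ℝ) * (x * (x ^ 2 / 4 + ν ^ 2) / (x ^ 2 - ν ^ 2) ^ 2) *
        besselJ ν x * sin (besselPhase ν x - a))) x := by
  have hx0 : 0 < x := hν.trans_lt hx
  have hF : 0 < x ^ 2 - ν ^ 2 := by nlinarith
  have hr : 0 < √(x ^ 2 - ν ^ 2) := sqrt_pos.2 hF
  have hr2 : x ^ 2 - ν ^ 2 = √(x ^ 2 - ν ^ 2) ^ 2 := (sq_sqrt hF.le).symm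
  have hFd : HasDerivAt (fun x : ℝ => x ^ 2 - ν ^ 2) (2 * x) x :=
    ((hasDerivAt_pow 2 x).sub_const (ν ^ 2)).congr_deriv (by simp)
  have hJ := hasDerivAt_besselJ ν hx0
  have hphase := (hasDerivAt_besselPhase hν hx).sub_const a
  have hamp := (((hasDerivAt_pow 2 x).fun_div (hFd.const_mul 2) (by positivity)).fun_mul hJ).fun_add
    (hasDerivAt_mul_besselJDeriv ν hx0)
  have hform := (hamp.fun_mul hphase.sin).fun_sub
    (((hFd.sqrt hF.ne').fun_mul hJ).fun_mul hphase.cos)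
  refine ((hFd.rpow_const (p := -(1 / 4)) (Or.inl hF.ne')).fun_mul hform).congr_deriv ?_
  rw [rpow_sub_one hF.ne']
  generalize (x ^ 2 - ν ^ 2) ^ (-(1 / 4) : ℝ) = p
  generalize sin (besselPhase ν x - a) = s
  generalize cos (besselPhase ν x - a) = c
  generalize besselJ ν x = J
  generalize besselJDeriv ν x = D
  have hν2 : ν ^ 2 = x ^ 2 - √(x ^ 2 - ν ^ 2) ^ 2 := by linarith
  rw [hr2]
  generalize √(x ^ 2 - ν ^ 2) = r at *
  rw [sqrt_sq hr.le, hν2]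
  push_cast
  field_simp
  ring

lemma exists_forall_mul_pos_of_isPreconnected {f : ℝ → ℝ} {s : Set ℝ} (hs : IsPreconnected s)
    (hf : ContinuousOn f s) (hne : ∀ x ∈ s, f x ≠ 0) : ∃ σ : ℝ, ∀ x ∈ s, 0 < σ * f x := by
  rcases s.eq_empty_or_nonempty with rfl | ⟨y, hy⟩
  · simp
  refine ⟨f y, fun x hx => ?_⟩
  by_contra! hle
  obtain ⟨c, hc, hc0⟩ := hs.intermediate_value hx hy (continuousOn_const.mul hf)
    (show (0 : ℝ) ∈ Icc (f y * f x) (f y * f y) from ⟨hle, mul_self_nonneg _⟩)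
  exact mul_ne_zero (hne y hy) (hne c hc) hc0

lemma exists_besselJ_eq_zero_of_besselPhase_eq_add_pi {ν a b : ℝ} (hν : 0 ≤ ν) (ha : ν < a)
    (hab : a < b) (hJa : besselJ ν a = 0) (hphase : besselPhase ν b = besselPhase ν a + π) :
    ∃ c ∈ Ioc a b, besselJ ν c = 0 := by
  by_contra! hne
  have hpos : ∀ {x}, a ≤ x → 0 < x ^ 2 - ν ^ 2 := fun h => by nlinarith
  obtain ⟨σ, hσ⟩ := exists_forall_mul_pos_of_isPreconnected isPreconnected_Ioc
    (continuous_besselJ hν).continuousOn hne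
  have hderiv := fun x (hx : x ∈ Icc a b) =>
    (hasDerivAt_phaseWronskian hν (ha.trans_le hx.1) (besselPhase ν a)).const_mul σ
  have hanti := antitoneOn_of_hasDerivWithinAt_nonpos (convex_Icc a b)
    (fun x hx => (hderiv x hx).continuousAt.continuousWithinAt)
    (fun x hx => (hderiv x (interior_subset hx)).hasDerivWithinAt) fun x hx => by
      rw [interior_Icc] at hx
      have hx0 : 0 < x := hν.trans_lt (ha.trans hx.1)
      have hF := hpos hx.1.le
      have hJ := hσ x (Ioo_subset_Ioc_self hx)
      have hsin : 0 ≤ sin (besselPhase ν x - besselPhase ν a) := by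
        refine sin_nonneg_of_nonneg_of_le_pi ?_ ?_
        · linarith [monotoneOn_besselPhase hν ha (ha.trans hx.1) hx.1.le]
        · linarith [monotoneOn_besselPhase hν (ha.trans hx.1) (ha.trans hab) hx.2.le]
      have : 0 ≤ (x ^ 2 - ν ^ 2) ^ (-(1 / 4) : ℝ) * (x * (x ^ 2 / 4 + ν ^ 2) /
        (x ^ 2 - ν ^ 2) ^ 2) * (σ * besselJ ν x) * sin (besselPhase ν x - besselPhase ν a) := by
        positivity
      linarith
  have hle := hanti (left_mem_Icc.2 hab.le) (right_mem_Icc.2 hab.le) hab.le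
  simp only [phaseWronskian, hJa, hphase, add_sub_cancel_left, sub_self, sin_zero, sin_pi, cos_pi,
    mul_zero, zero_mul] at hle
  have : 0 < (b ^ 2 - ν ^ 2) ^ (-(1 / 4) : ℝ) * √(b ^ 2 - ν ^ 2) * (σ * besselJ ν b) := by
    have hF := hpos hab.le
    have hJ := hσ b ⟨hab, le_rfl⟩
    positivity
  linarith

lemma exists_besselJ_eq_zero_besselPhase_le {ν z : ℝ} (hν : 0 ≤ ν) (hz : 0 < z)
    (hJ : besselJ ν z = 0) :
    ∃ c, z < c ∧ besselJ ν c = 0 ∧ besselPhase ν c ≤ besselPhase ν z + π := by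
  have hνz := lt_of_besselJ_eq_zero hν hz hJ
  obtain ⟨X, hX⟩ : ∃ X, X = besselPhase ν z + π + ν * (π / 2) := ⟨_, rfl⟩
  have hzX : z < X := by linarith [pi_pos, sub_le_besselPhase hν hνz]
  obtain ⟨b, hb, hphase⟩ := intermediate_value_Icc hzX.le
    (fun x hx => (hasDerivAt_besselPhase hν (hνz.trans_le hx.1)).continuousAt.continuousWithinAt)
    (show besselPhase ν z + π ∈ Icc _ _ from
      ⟨by linarith [pi_pos], by linarith [sub_le_besselPhase hν (hνz.trans hzX)]⟩)
  have hzb : z < b := hb.1.lt_of_ne fun h => by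
    rw [← h] at hphase
    linarith [pi_pos]
  obtain ⟨c, hc, hJc⟩ :=
    exists_besselJ_eq_zero_of_besselPhase_eq_add_pi hν hνz hzb hJ hphase
  exact ⟨c, hc.1, hJc, (monotoneOn_besselPhase hν (hνz.trans hc.1) (hνz.trans hzb) hc.2).trans_eq
    hphase⟩

/-! ### Poisson's integral and the large-argument asymptotics of `J_ν` -/

section Asymptotics

open Complex (I)

lemma besselCoeff_eq_mul_succ (ν : ℝ) (n : ℕ) :
    besselCoeff ν n = (n + 1) * (ν + n + 1) * besselCoeff ν (n + 1) := by
  rw [besselCoeff_eq_mul_add, ← besselCoeff_succ]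
  ring

lemma continuous_one_sub_sq_rpow {μ : ℝ} (hμ : 0 ≤ μ) :
    Continuous fun t : ℝ => (1 - t ^ 2) ^ μ :=
  (by fun_prop : Continuous fun t : ℝ => 1 - t ^ 2).rpow_const fun _ => Or.inr hμ

lemma integral_one_sub_sq_rpow_mul_pow_succ {μ : ℝ} (hμ : 0 ≤ μ) (n : ℕ) :
    (2 * n + 2 * μ + 3) * ∫ t in (0 : ℝ)..1, (1 - t ^ 2) ^ μ * t ^ (2 * (n + 1)) =
      (2 * n + 1) * ∫ t in (0 : ℝ)..1, (1 - t ^ 2) ^ μ * t ^ (2 * n) := by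
  have := continuous_one_sub_sq_rpow hμ
  have hderiv : ∀ t ∈ uIcc (0 : ℝ) 1,
      HasDerivAt (fun t : ℝ => t ^ (2 * n + 1) * (1 - t ^ 2) ^ (μ + 1))
        ((2 * n + 1) * ((1 - t ^ 2) ^ μ * t ^ (2 * n)) -
          (2 * n + 2 * μ + 3) * ((1 - t ^ 2) ^ μ * t ^ (2 * (n + 1)))) t := by
    intro t ht
    rw [uIcc_of_le zero_le_one] at ht
    have hpos : 0 ≤ 1 - t ^ 2 := by nlinarith [ht.1, ht.2]
    have hweight := ((hasDerivAt_pow 2 t).const_sub 1).rpow_const (p := μ + 1)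
      (Or.inr (by linarith))
    refine ((hasDerivAt_pow (2 * n + 1) t).mul hweight).congr_deriv ?_
    rw [rpow_add_one' hpos (by positivity)]
    simp only [add_sub_cancel_right, Nat.add_sub_cancel]
    push_cast
    ring
  have hparts := intervalIntegral.integral_eq_sub_of_hasDerivAt hderiv
    (by apply Continuous.intervalIntegrable; fun_prop)
  rw [intervalIntegral.integral_sub (by apply Continuous.intervalIntegrable; fun_prop)
    (by apply Continuous.intervalIntegrable; fun_prop), intervalIntegral.integral_const_mul,
    intervalIntegral.integral_const_mul, one_pow, one_pow, sub_self,
    zero_rpow (by positivity), mul_zero, zero_pow (by positivity), zero_mul, sub_zero] at hparts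
  linarith

lemma integral_one_sub_sq_rpow_mul_pow {μ : ℝ} (hμ : 0 ≤ μ) (n : ℕ) :
    ∫ t in (0 : ℝ)..1, (1 - t ^ 2) ^ μ * t ^ (2 * n) =
      (∫ t in (0 : ℝ)..1, (1 - t ^ 2) ^ μ) * Gamma (μ + 3 / 2) *
        ((2 * n).factorial / 4 ^ n * besselCoeff (μ + 1 / 2) n) := by
  induction n with
  | zero =>
    have hΓ : Gamma (μ + 3 / 2) ≠ 0 := (Gamma_pos_of_pos (by linarith)).ne'
    have harg : μ + 2⁻¹ + 1 = μ + 3 / 2 := by ring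
    simp [besselCoeff, harg, hΓ]
  | succ n ih =>
    have hstep := integral_one_sub_sq_rpow_mul_pow_succ hμ n
    have hfact : ((2 * (n + 1)).factorial : ℝ) =
        (2 * n + 2) * ((2 * n + 1) * (2 * n).factorial) := by
      rw [show 2 * (n + 1) = 2 * n + 1 + 1 by ring, Nat.factorial_succ, Nat.factorial_succ]
      push_cast
      ring
    rw [ih, besselCoeff_eq_mul_succ] at hstep
    have hfactor : (2 * n + 2 * μ + 3 : ℝ) ≠ 0 := by positivity
    refine mul_left_cancel₀ hfactor (hstep.trans ?_)
    rw [hfact, pow_succ]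
    field_simp
    ring

lemma hasSum_integral_one_sub_sq_rpow_mul_cos {μ : ℝ} (hμ : 0 ≤ μ) (x : ℝ) :
    HasSum (fun n : ℕ => (-1) ^ n * x ^ (2 * n) / (2 * n).factorial *
      ∫ t in (0 : ℝ)..1, (1 - t ^ 2) ^ μ * t ^ (2 * n))
      (∫ t in (0 : ℝ)..1, (1 - t ^ 2) ^ μ * cos (x * t)) := by
  have := continuous_one_sub_sq_rpow hμ
  simp only [← intervalIntegral.integral_const_mul]
  refine intervalIntegral.hasSum_integral_of_dominated_convergence
    (fun n _ => x ^ (2 * n) / ((2 * n).factorial : ℝ))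
    (fun n => (by fun_prop : Continuous _).aestronglyMeasurable)
    (fun n => ae_of_all _ fun t ht => ?_)
    (ae_of_all _ fun t _ => (hasSum_cosh x).summable) intervalIntegrable_const
    (ae_of_all _ fun t _ => ?_)
  · rw [uIoc_of_le zero_le_one] at ht
    have hpos : 0 ≤ 1 - t ^ 2 := by nlinarith [ht.1, ht.2]
    have hw_le : (1 - t ^ 2) ^ μ ≤ 1 := rpow_le_one hpos (by nlinarith [ht.1]) hμ
    have hpow_le : t ^ (2 * n) ≤ 1 := pow_le_one₀ ht.1.le ht.2
    have hx : 0 ≤ x ^ (2 * n) := (even_two_mul n).pow_nonneg x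
    have ht' : 0 ≤ t ^ (2 * n) := pow_nonneg ht.1.le _
    rw [norm_mul, norm_div, norm_mul, norm_mul, norm_pow, norm_neg, norm_one, one_pow, one_mul,
      norm_of_nonneg hx, norm_of_nonneg ht', norm_of_nonneg (rpow_nonneg hpos μ),
      norm_of_nonneg (Nat.cast_nonneg _)]
    exact mul_le_of_le_one_right (by positivity) (mul_le_one₀ hw_le ht' hpow_le)
  · refine ((hasSum_cos (x * t)).mul_left ((1 - t ^ 2) ^ μ)).congr_fun fun n => ?_
    rw [mul_pow]
    ring

lemma integral_one_sub_sq_rpow_mul_cos {μ : ℝ} (hμ : 0 ≤ μ) (x : ℝ) :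
    ∫ t in (0 : ℝ)..1, (1 - t ^ 2) ^ μ * cos (x * t) =
      (∫ t in (0 : ℝ)..1, (1 - t ^ 2) ^ μ) * Gamma (μ + 3 / 2) *
        besselClifford (μ + 1 / 2) (-(x / 2) ^ 2) := by
  rw [← (hasSum_integral_one_sub_sq_rpow_mul_cos hμ x).tsum_eq, besselClifford, ← tsum_mul_left]
  refine tsum_congr fun n => ?_
  have hfact : ((2 * n).factorial : ℝ) ≠ 0 := by positivity
  rw [integral_one_sub_sq_rpow_mul_pow hμ, neg_pow ((x / 2) ^ 2), div_pow, div_pow, ← pow_mul,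
    show (2 ^ 2 : ℝ) = 4 by norm_num]
  field_simp

/-- The integrand `(1 - z²)^μ e^{ixz}` whose real part on `[0, 1]` is Poisson's integrand for
`J_{μ + 1/2}`. -/
noncomputable def poissonIntegrand (μ x : ℝ) (z : ℂ) : ℂ :=
  (1 - z ^ 2) ^ (μ : ℂ) * Complex.exp (I * x * z)

lemma one_sub_sq_re (z : ℂ) : (1 - z ^ 2).re = 1 - z.re ^ 2 + z.im ^ 2 := by
  simp only [pow_two, Complex.sub_re, Complex.one_re, Complex.mul_re]
  ring

lemma continuousAt_poissonIntegrand {μ : ℝ} (hμ : 0 < μ) (x : ℝ) {z : ℂ}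
    (hz : z.re ∈ Icc (0 : ℝ) 1) : ContinuousAt (poissonIntegrand μ x) z := by
  have hre : 0 ≤ (1 - z ^ 2).re := by
    rw [one_sub_sq_re]
    nlinarith [hz.1, hz.2, sq_nonneg z.im]
  have hbase : ContinuousAt (fun z : ℂ => 1 - z ^ 2) z := by fun_prop
  exact (ContinuousAt.comp (f := fun z : ℂ => 1 - z ^ 2)
    (Complex.continuousAt_cpow_const_of_re_pos (Or.inl hre) (by simpa using hμ)) hbase).mul
    (by fun_prop)

lemma differentiableAt_poissonIntegrand (μ x : ℝ) {z : ℂ} (hz : z.re ∈ Ioo (0 : ℝ) 1) :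
    DifferentiableAt ℂ (poissonIntegrand μ x) z := by
  have hre : 0 < (1 - z ^ 2).re := by
    rw [one_sub_sq_re]
    nlinarith [hz.1, hz.2, sq_nonneg z.im]
  exact ((by fun_prop : DifferentiableAt ℂ (fun z : ℂ => 1 - z ^ 2) z).cpow
    (differentiableAt_const _) (Or.inl hre)).mul (by fun_prop)

lemma integral_boundary_poissonIntegrand {μ : ℝ} (hμ : 0 < μ) (x : ℝ) :
    (∫ t in (0 : ℝ)..1, poissonIntegrand μ x t) -
      (∫ t in (0 : ℝ)..1, poissonIntegrand μ x (t + I)) +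
      I * (∫ y in (0 : ℝ)..1, poissonIntegrand μ x (1 + y * I)) -
      I * (∫ y in (0 : ℝ)..1, poissonIntegrand μ x (y * I)) = 0 := by
  have hrect := Complex.integral_boundary_rect_eq_zero_of_continuousOn_of_differentiableOn
    (poissonIntegrand μ x) 0 (1 + I)
    (fun z hz => by
      have hz_re := (Complex.mem_reProdIm.1 hz).1
      simp only [Complex.zero_re, Complex.add_re, Complex.one_re, Complex.I_re, add_zero,
        uIcc_of_le zero_le_one] at hz_re
      exact (continuousAt_poissonIntegrand hμ x hz_re).continuousWithinAt)
    (fun z hz => by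
      have hz_re := (Complex.mem_reProdIm.1 hz).1
      simp only [Complex.zero_re, Complex.add_re, Complex.one_re, Complex.I_re, add_zero,
        min_eq_left zero_le_one, max_eq_right zero_le_one] at hz_re
      exact (differentiableAt_poissonIntegrand μ x hz_re).differentiableWithinAt)
  simpa only [Complex.zero_re, Complex.add_re, Complex.one_re, Complex.I_re, add_zero,
    Complex.zero_im, Complex.add_im, Complex.one_im, Complex.I_im, zero_add, Complex.ofReal_zero,
    Complex.ofReal_one, zero_mul, one_mul, smul_eq_mul] using hrect

lemma re_integral_poissonIntegrand_bottom {μ : ℝ} (hμ : 0 < μ) (x : ℝ) :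
    (∫ t in (0 : ℝ)..1, poissonIntegrand μ x t).re =
      ∫ t in (0 : ℝ)..1, (1 - t ^ 2) ^ μ * cos (x * t) := by
  have hint : IntervalIntegrable (fun t : ℝ => poissonIntegrand μ x t) volume 0 1 := by
    refine ContinuousOn.intervalIntegrable fun t ht => ?_
    rw [uIcc_of_le zero_le_one] at ht
    exact (ContinuousAt.comp (f := fun t : ℝ => (t : ℂ)) (continuousAt_poissonIntegrand hμ x ht)
      (by fun_prop)).continuousWithinAt
  rw [← Complex.reCLM_apply, ← Complex.reCLM.intervalIntegral_comp_comm hint]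
  refine intervalIntegral.integral_congr fun t ht => ?_
  rw [uIcc_of_le zero_le_one] at ht
  have hpos : 0 ≤ 1 - t ^ 2 := by nlinarith [ht.1, ht.2]
  have hbase : ((1 : ℂ) - (t : ℂ) ^ 2) ^ (μ : ℂ) = ((1 - t ^ 2) ^ μ : ℝ) := by
    rw [Complex.ofReal_cpow hpos]
    push_cast
    rfl
  have hexp : I * x * t = (x * t : ℝ) * I := by push_cast; ring
  simp only [Complex.reCLM_apply, poissonIntegrand]
  rw [hbase, hexp, Complex.re_ofReal_mul, Complex.exp_ofReal_mul_I_re]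

lemma re_I_mul_integral_poissonIntegrand_left (μ x : ℝ) :
    (I * ∫ y in (0 : ℝ)..1, poissonIntegrand μ x (y * I)).re = 0 := by
  have hreal (y : ℝ) :
      poissonIntegrand μ x (y * I) = ((1 + y ^ 2) ^ μ * exp (-(x * y)) : ℝ) := by
    have hbase : (1 : ℂ) - (y * I) ^ 2 = (1 + y ^ 2 : ℝ) := by
      rw [mul_pow, Complex.I_sq]
      push_cast
      ring
    have hexp : I * x * (y * I) = (-(x * y) : ℝ) := by
      push_cast
      linear_combination (x * y : ℂ) * Complex.I_sq
    rw [poissonIntegrand, hbase, hexp, ← Complex.ofReal_cpow (by positivity), ← Complex.ofReal_exp,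
      ← Complex.ofReal_mul]
  simp only [hreal, intervalIntegral.integral_ofReal, Complex.I_mul_re, Complex.ofReal_im, neg_zero]

lemma integral_one_sub_sq_rpow_mul_cos_eq_re {μ : ℝ} (hμ : 0 < μ) (x : ℝ) :
    ∫ t in (0 : ℝ)..1, (1 - t ^ 2) ^ μ * cos (x * t) =
      (∫ t in (0 : ℝ)..1, poissonIntegrand μ x (t + I)).re -
        (I * ∫ y in (0 : ℝ)..1, poissonIntegrand μ x (1 + y * I)).re := by
  have hre := congrArg Complex.re (integral_boundary_poissonIntegrand hμ x)
  rw [Complex.sub_re, Complex.add_re, Complex.sub_re, re_I_mul_integral_poissonIntegrand_left,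
    re_integral_poissonIntegrand_bottom hμ, Complex.zero_re] at hre
  linarith

lemma norm_integral_poissonIntegrand_top_le {μ : ℝ} (hμ : 0 ≤ μ) (x : ℝ) :
    ‖∫ t in (0 : ℝ)..1, poissonIntegrand μ x (t + I)‖ ≤ 5 ^ μ * exp (-x) := by
  have hpoint : ∀ t ∈ uIoc (0 : ℝ) 1, ‖poissonIntegrand μ x (t + I)‖ ≤ 5 ^ μ * exp (-x) := by
    intro t ht
    rw [uIoc_of_le zero_le_one] at ht
    have hbase : ‖(1 - (t + I) ^ 2 : ℂ)‖ ≤ 5 := by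
      have hle : ‖(t + I : ℂ)‖ ≤ 2 := by
        refine (norm_add_le _ _).trans ?_
        rw [Complex.norm_real, Complex.norm_I, norm_of_nonneg ht.1.le]
        linarith [ht.2]
      refine (norm_sub_le _ _).trans ?_
      rw [norm_one, norm_pow]
      nlinarith [norm_nonneg (t + I : ℂ)]
    have hexp : (I * x * (t + I)).re = -x := by simp
    rw [poissonIntegrand, norm_mul, Complex.norm_cpow_real, Complex.norm_exp, hexp]
    gcongr
  simpa using intervalIntegral.norm_integral_le_of_norm_le_const hpoint

lemma ofReal_mul_cpow {r : ℝ} (hr : 0 < r) {z : ℂ} (hz : z ≠ 0) (w : ℂ) :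
    ((r : ℂ) * z) ^ w = (r : ℂ) ^ w * z ^ w := by
  have hr' : (r : ℂ) ≠ 0 := Complex.ofReal_ne_zero.2 hr.ne'
  rw [Complex.cpow_def_of_ne_zero (mul_ne_zero hr' hz), Complex.cpow_def_of_ne_zero hr',
    Complex.cpow_def_of_ne_zero hz, Complex.log_ofReal_mul hr hz, ← Complex.exp_add, add_mul,
    Complex.ofReal_log hr.le]

lemma ofReal_sub_two_mul_I_ne_zero (y : ℝ) : (y - 2 * I : ℂ) ≠ 0 := fun h => by
  simpa using congrArg Complex.im h

lemma poissonIntegrand_one_add_mul_I {μ y : ℝ} (hμ : 0 < μ) (hy : 0 ≤ y) (x : ℝ) :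
    poissonIntegrand μ x (1 + y * I) =
      Complex.exp (x * I) * ((exp (-(x * y)) * y ^ μ : ℝ) * (y - 2 * I) ^ (μ : ℂ)) := by
  have hbase : (1 - (1 + y * I) ^ 2 : ℂ) = (y : ℂ) * (y - 2 * I) := by
    linear_combination (-(y : ℂ) ^ 2) * Complex.I_sq
  have hexp : I * x * (1 + y * I) = x * I + (-(x * y) : ℝ) := by
    push_cast
    linear_combination (x * y : ℂ) * Complex.I_sq
  rw [poissonIntegrand, hbase, hexp, Complex.exp_add, ← Complex.ofReal_exp]
  rcases hy.eq_or_lt with rfl | hy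
  · simp [Complex.zero_cpow (Complex.ofReal_ne_zero.2 hμ.ne'), zero_rpow hμ.ne']
  · rw [ofReal_mul_cpow hy (ofReal_sub_two_mul_I_ne_zero y), ← Complex.ofReal_cpow hy.le]
    push_cast
    ring

/-- The integral of `poissonIntegrand` along the edge from `1` to `1 + i`, rescaled by `s = x y`
and freed from its factor `x^(-μ-1) e^{ix}`; it converges as `x → ∞`. -/
noncomputable def poissonEdgeIntegral (μ x : ℝ) : ℂ :=
  ∫ s in Ioi (0 : ℝ), (Ioc 0 x).indicator
    (fun s : ℝ => ((exp (-s) * s ^ μ : ℝ) : ℂ) * ((s / x : ℝ) - 2 * I) ^ (μ : ℂ)) s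

lemma rpow_mul_integral_poissonIntegrand_right {μ x : ℝ} (hμ : 0 < μ) (hx : 0 < x) :
    (x ^ (μ + 1) : ℝ) * ∫ y in (0 : ℝ)..1, poissonIntegrand μ x (1 + y * I) =
      Complex.exp (x * I) * poissonEdgeIntegral μ x := by
  set g : ℝ → ℂ := fun y => ((exp (-(x * y)) * y ^ μ : ℝ) : ℂ) * (y - 2 * I) ^ (μ : ℂ) with hg
  have hedge : ∫ y in (0 : ℝ)..1, poissonIntegrand μ x (1 + y * I) =
      Complex.exp (x * I) * ∫ y in (0 : ℝ)..1, g y := by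
    rw [← intervalIntegral.integral_const_mul]
    refine intervalIntegral.integral_congr fun y hy => ?_
    rw [uIcc_of_le zero_le_one] at hy
    exact poissonIntegrand_one_add_mul_I hμ hy.1 x
  have hrescale := intervalIntegral.integral_comp_div (a := 0) (b := x) g hx.ne'
  rw [zero_div, div_self hx.ne'] at hrescale
  have hpow : ((x ^ μ : ℝ) : ℂ) ≠ 0 := Complex.ofReal_ne_zero.2 (rpow_pos_of_pos hx μ).ne'
  have hK : poissonEdgeIntegral μ x = (x ^ μ : ℝ) * ∫ s in (0 : ℝ)..x, g (s / x) := by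
    rw [poissonEdgeIntegral, integral_indicator measurableSet_Ioc,
      Measure.restrict_restrict measurableSet_Ioc, inter_eq_left.2 Ioc_subset_Ioi_self,
      intervalIntegral.integral_of_le hx.le, ← integral_const_mul]
    refine setIntegral_congr_fun measurableSet_Ioc fun s hs => ?_
    simp only [hg]
    rw [mul_div_cancel₀ s hx.ne', div_rpow hs.1.le hx.le]
    push_cast
    field_simp
  rw [hedge, hK, hrescale, rpow_add_one hx.ne', Complex.real_smul]
  push_cast
  ring

lemma norm_poissonEdgeIntegrand_le {μ x s : ℝ} (hμ : 0 ≤ μ) (hs : 0 < s) :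
    ‖(Ioc 0 x).indicator
      (fun s : ℝ => ((exp (-s) * s ^ μ : ℝ) : ℂ) * ((s / x : ℝ) - 2 * I) ^ (μ : ℂ)) s‖ ≤
      exp (-s) * s ^ μ * 3 ^ μ := by
  by_cases hsx : s ∈ Ioc 0 x
  · rw [indicator_of_mem hsx, norm_mul, Complex.norm_cpow_real, Complex.norm_real,
      norm_of_nonneg (by positivity)]
    have hx : 0 < x := hs.trans_le hsx.2
    have hbase : ‖((s / x : ℝ) - 2 * I : ℂ)‖ ≤ 3 := by
      refine (norm_sub_le _ _).trans ?_
      rw [Complex.norm_real, norm_mul, Complex.norm_I, norm_of_nonneg (by positivity)]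
      norm_num
      linarith [(div_le_one hx).2 hsx.2]
    gcongr
  · rw [indicator_of_notMem hsx, norm_zero]
    positivity

lemma tendsto_poissonEdgeIntegrand {μ s : ℝ} (hμ : 0 < μ) (hs : 0 < s) :
    Tendsto (fun x : ℝ => (Ioc 0 x).indicator
      (fun s : ℝ => ((exp (-s) * s ^ μ : ℝ) : ℂ) * ((s / x : ℝ) - 2 * I) ^ (μ : ℂ)) s) atTop
      (𝓝 ((exp (-s) * s ^ μ : ℝ) * (-(2 * I)) ^ (μ : ℂ))) := by
  have hratio : Tendsto (fun x : ℝ => s / x) atTop (𝓝 0) :=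
    tendsto_const_nhds.div_atTop tendsto_id
  have hbase : Tendsto (fun x : ℝ => ((s / x : ℝ) : ℂ) - 2 * I) atTop (𝓝 (-(2 * I))) := by
    simpa using ((Complex.continuous_ofReal.tendsto 0).comp hratio).sub_const (2 * I)
  have hcont : ContinuousAt (fun z : ℂ => z ^ (μ : ℂ)) (-(2 * I)) :=
    Complex.continuousAt_cpow_const_of_re_pos (Or.inl (by simp)) (by simpa using hμ)
  refine ((hcont.tendsto.comp hbase).const_mul ((exp (-s) * s ^ μ : ℝ) : ℂ)).congr' ?_
  filter_upwards [eventually_ge_atTop s] with x hx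
  rw [indicator_of_mem (show s ∈ Ioc 0 x from ⟨hs, hx⟩)]
  rfl

lemma tendsto_poissonEdgeIntegral {μ : ℝ} (hμ : 0 < μ) :
    Tendsto (poissonEdgeIntegral μ) atTop (𝓝 (Gamma (μ + 1) * (-(2 * I)) ^ (μ : ℂ))) := by
  have hlim : (Gamma (μ + 1) * (-(2 * I)) ^ (μ : ℂ) : ℂ) =
      ∫ s in Ioi (0 : ℝ), ((exp (-s) * s ^ μ : ℝ) : ℂ) * (-(2 * I)) ^ (μ : ℂ) := by
    rw [integral_mul_const, integral_complex_ofReal, Gamma_eq_integral (by positivity),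
      add_sub_cancel_right]
  have hint := GammaIntegral_convergent (s := μ + 1) (by positivity)
  rw [add_sub_cancel_right] at hint
  rw [hlim]
  refine tendsto_integral_filter_of_dominated_convergence
    (fun s => exp (-s) * s ^ μ * 3 ^ μ) ?_ ?_ (hint.mul_const _) ?_
  · refine Eventually.of_forall fun x => Measurable.aestronglyMeasurable ?_
    exact Measurable.indicator (by fun_prop) measurableSet_Ioc
  · exact Eventually.of_forall fun x => (ae_restrict_iff' measurableSet_Ioi).2 <|
      ae_of_all _ fun s hs => norm_poissonEdgeIntegrand_le hμ.le hs
  · exact (ae_restrict_iff' measurableSet_Ioi).2 <|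
      ae_of_all _ fun s hs => tendsto_poissonEdgeIntegrand hμ hs

lemma neg_two_mul_I_cpow (μ : ℝ) :
    (-(2 * I)) ^ (μ : ℂ) = (2 ^ μ : ℝ) * Complex.exp ((-(μ * (π / 2)) : ℝ) * I) := by
  have hfactor : -(2 * I) = (2 : ℝ) * -I := by push_cast; ring
  rw [hfactor, ofReal_mul_cpow two_pos (neg_ne_zero.2 Complex.I_ne_zero),
    Complex.cpow_def_of_ne_zero (neg_ne_zero.2 Complex.I_ne_zero), Complex.log_neg_I,
    Complex.ofReal_cpow zero_le_two]
  congr 2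
  push_cast
  ring

lemma re_I_mul_exp_mul_Gamma_mul_cpow (μ x : ℝ) :
    (I * (Complex.exp (x * I) * (Gamma (μ + 1) * (-(2 * I)) ^ (μ : ℂ)))).re =
      -(Gamma (μ + 1) * 2 ^ μ * sin (x - μ * (π / 2))) := by
  have hpolar : I * (Complex.exp (x * I) * (Gamma (μ + 1) * (-(2 * I)) ^ (μ : ℂ))) =
      (Gamma (μ + 1) * 2 ^ μ : ℝ) * (I * Complex.exp ((x - μ * (π / 2) : ℝ) * I)) := by
    rw [neg_two_mul_I_cpow, sub_eq_add_neg, Complex.ofReal_add, add_mul, Complex.exp_add,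
      Complex.ofReal_mul]
    ring
  rw [hpolar, Complex.re_ofReal_mul, Complex.I_mul_re, Complex.exp_ofReal_mul_I_im, mul_neg]

lemma tendsto_rpow_mul_integral_cos {μ : ℝ} (hμ : 0 < μ) :
    Tendsto (fun x : ℝ => x ^ (μ + 1) * (∫ t in (0 : ℝ)..1, (1 - t ^ 2) ^ μ * cos (x * t)) -
      Gamma (μ + 1) * 2 ^ μ * sin (x - μ * (π / 2))) atTop (𝓝 0) := by
  set L : ℂ := Gamma (μ + 1) * (-(2 * I)) ^ (μ : ℂ) with hL
  have hbound := ((tendsto_rpow_mul_exp_neg_mul_atTop_nhds_zero (μ + 1) 1 one_pos).const_mul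
    ((5 : ℝ) ^ μ)).add (tendsto_iff_norm_sub_tendsto_zero.1 (tendsto_poissonEdgeIntegral hμ))
  rw [mul_zero, add_zero] at hbound
  refine squeeze_zero_norm' ?_ hbound
  filter_upwards [eventually_gt_atTop 0] with x hx
  set T := ∫ t in (0 : ℝ)..1, poissonIntegrand μ x (t + I)
  set R := ∫ y in (0 : ℝ)..1, poissonIntegrand μ x (1 + y * I)
  have hdiff : x ^ (μ + 1) * (∫ t in (0 : ℝ)..1, (1 - t ^ 2) ^ μ * cos (x * t)) -
      Gamma (μ + 1) * 2 ^ μ * sin (x - μ * (π / 2)) =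
      ((x ^ (μ + 1) : ℝ) * T -
        I * (Complex.exp (x * I) * (poissonEdgeIntegral μ x - L))).re := by
    rw [integral_one_sub_sq_rpow_mul_cos_eq_re hμ, ← neg_eq_iff_eq_neg.2
      (re_I_mul_exp_mul_Gamma_mul_cpow μ x), ← hL, mul_sub (Complex.exp (x * I)),
      ← rpow_mul_integral_poissonIntegrand_right hμ hx, Complex.sub_re, Complex.re_ofReal_mul,
      mul_sub I, Complex.sub_re, mul_left_comm I ((x ^ (μ + 1) : ℝ) : ℂ), Complex.re_ofReal_mul]
    ring
  have htop := mul_le_mul_of_nonneg_left (norm_integral_poissonIntegrand_top_le hμ.le x)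
    (by positivity : 0 ≤ x ^ (μ + 1))
  rw [hdiff]
  refine (Complex.abs_re_le_norm _).trans ((norm_sub_le _ _).trans ?_)
  rw [norm_mul, norm_mul, norm_mul, Complex.norm_I, Complex.norm_exp_ofReal_mul_I, one_mul,
    one_mul, Complex.norm_real, norm_of_nonneg (by positivity), neg_one_mul]
  linarith

lemma exists_tendsto_sqrt_mul_besselJ_of_half_lt {ν : ℝ} (hν : 1 / 2 < ν) :
    ∃ C : ℝ, C ≠ 0 ∧
      Tendsto (fun x => √x * besselJ ν x - C * cos (x - ν * (π / 2) - π / 4)) atTop (𝓝 0) := by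
  obtain ⟨μ, rfl⟩ : ∃ μ, ν = μ + 1 / 2 := ⟨ν - 1 / 2, by ring⟩
  have hμ : 0 < μ := by linarith
  set c := (∫ t in (0 : ℝ)..1, (1 - t ^ 2) ^ μ) * Gamma (μ + 3 / 2) with hc
  have hc_pos : 0 < c := by
    refine mul_pos ?_ (Gamma_pos_of_pos (by positivity))
    refine intervalIntegral.intervalIntegral_pos_of_pos_on
      ((continuous_one_sub_sq_rpow hμ.le).intervalIntegrable _ _) (fun t ht => ?_) one_pos
    exact rpow_pos_of_pos (by nlinarith [ht.1, ht.2]) _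
  have : 0 < Gamma (μ + 1) := Gamma_pos_of_pos (by positivity)
  set d : ℝ := 2⁻¹ ^ (μ + 1 / 2) / c with hd
  refine ⟨d * (Gamma (μ + 1) * 2 ^ μ), by positivity, ?_⟩
  have hlim := (tendsto_rpow_mul_integral_cos hμ).const_mul d
  rw [mul_zero] at hlim
  refine hlim.congr' ?_
  filter_upwards [eventually_gt_atTop 0] with x hx
  have hphase : x - (μ + 1 / 2) * (π / 2) - π / 4 = (x - μ * (π / 2)) - π / 2 := by ring
  have hpow : x ^ (μ + 1) = x ^ (1 / 2 : ℝ) * x ^ (μ + 1 / 2) := by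
    rw [← rpow_add hx]
    ring_nf
  rw [hphase, cos_sub_pi_div_two, besselJ_eq_rpow_mul, integral_one_sub_sq_rpow_mul_cos hμ.le,
    ← hc, div_eq_mul_inv x 2, mul_rpow hx.le (by positivity), sqrt_eq_rpow, hpow, hd]
  field_simp

lemma exists_tendsto_sqrt_mul_besselJ {ν : ℝ} (hν : -(1 / 2) < ν) :
    ∃ C : ℝ, C ≠ 0 ∧
      Tendsto (fun x => √x * besselJ ν x - C * cos (x - ν * (π / 2) - π / 4)) atTop (𝓝 0) := by
  obtain ⟨C, -, hC⟩ := exists_tendsto_sqrt_mul_besselJ_of_half_lt (ν := ν + 1) (by linarith)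
  obtain ⟨D, hD₀, hD⟩ := exists_tendsto_sqrt_mul_besselJ_of_half_lt (ν := ν + 2) (by linarith)
  refine ⟨D, hD₀, ?_⟩
  have hcoeff : Tendsto (fun x : ℝ => 2 * (ν + 1) / x) atTop (𝓝 0) :=
    tendsto_const_nhds.div_atTop tendsto_id
  have hosc : Tendsto
      (fun x : ℝ => 2 * (ν + 1) / x * (C * cos (x - (ν + 1) * (π / 2) - π / 4))) atTop (𝓝 0) := by
    refine hcoeff.zero_mul_isBoundedUnder_le ⟨|C|, ?_⟩
    refine eventually_map.2 (Eventually.of_forall fun x => ?_)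
    simp only [Function.comp, Real.norm_eq_abs, abs_mul]
    exact mul_le_of_le_one_right (abs_nonneg _) (abs_cos_le_one _)
  have hsum := ((hcoeff.mul hC).add hosc).sub hD
  simp only [mul_zero, add_zero, sub_zero] at hsum
  refine hsum.congr' ?_
  filter_upwards [eventually_gt_atTop 0] with x hx
  have hphase : x - (ν + 2) * (π / 2) - π / 4 = (x - ν * (π / 2) - π / 4) - π := by ring
  rw [hphase, cos_sub_pi, besselJ_recurrence ν hx]
  ring

end Asymptotics

/-! ### The phase as a function of the order -/

section PhaseInOrder

variable {ν x : ℝ}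

lemma continuous_besselPhase_order (x : ℝ) : Continuous fun ν => besselPhase ν x :=
  (by fun_prop : Continuous fun ν : ℝ => √(x ^ 2 - ν ^ 2)).sub
    (continuous_id.mul (continuous_arccos.comp (continuous_id.div_const x)))

lemma besselPhase_self (hx : 0 < x) : besselPhase x x = 0 := by
  simp [besselPhase, div_self hx.ne']

lemma sq_sub_sq_pos (hν : ν ∈ Ioo (-x) x) : 0 < x ^ 2 - ν ^ 2 :=
  sub_pos.2 (sq_lt_sq' hν.1 hν.2)

lemma hasDerivAt_sqrt_sq_sub_sq (hν : ν ∈ Ioo (-x) x) :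
    HasDerivAt (fun ν => √(x ^ 2 - ν ^ 2)) (-ν / √(x ^ 2 - ν ^ 2)) ν := by
  refine (((hasDerivAt_pow 2 ν).const_sub (x ^ 2)).sqrt (sq_sub_sq_pos hν).ne').congr_deriv ?_
  push_cast
  ring

lemma hasDerivAt_arcsin_div (hν : ν ∈ Ioo (-x) x) :
    HasDerivAt (fun ν => arcsin (ν / x)) (1 / √(x ^ 2 - ν ^ 2)) ν := by
  have hx : 0 < x := by linarith [hν.1, hν.2]
  have hlt : ν / x < 1 := (div_lt_one hx).2 hν.2
  have hgt : -1 < ν / x := (lt_div_iff₀ hx).2 (by linarith [hν.1])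
  refine ((hasDerivAt_arcsin hgt.ne' hlt.ne).comp ν
    ((hasDerivAt_id ν).div_const x)).congr_deriv ?_
  rw [sqrt_one_sub_div_sq hx]
  field_simp

lemma hasDerivAt_arccos_div (hν : ν ∈ Ioo (-x) x) :
    HasDerivAt (fun ν => arccos (ν / x)) (-(1 / √(x ^ 2 - ν ^ 2))) ν :=
  (hasDerivAt_arcsin_div hν).const_sub _

lemma hasDerivAt_besselPhase_order (hν : ν ∈ Ioo (-x) x) :
    HasDerivAt (fun ν => besselPhase ν x) (-arccos (ν / x)) ν := by
  refine ((hasDerivAt_sqrt_sq_sub_sq hν).sub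
    ((hasDerivAt_id ν).mul (hasDerivAt_arccos_div hν))).congr_deriv ?_
  simp only [id]
  ring

lemma convexOn_besselPhase_order (x : ℝ) : ConvexOn ℝ (Icc (-x) x) fun ν => besselPhase ν x := by
  refine convexOn_of_hasDerivWithinAt2_nonneg (f' := fun ν => -arccos (ν / x))
    (f'' := fun ν => 1 / √(x ^ 2 - ν ^ 2)) (convex_Icc _ _)
    (continuous_besselPhase_order x).continuousOn ?_ ?_ ?_ <;> rw [interior_Icc]
  · exact fun ν hν => (hasDerivAt_besselPhase_order hν).hasDerivWithinAt
  · exact fun ν hν =>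
      ((hasDerivAt_arccos_div hν).neg.congr_deriv (neg_neg _)).hasDerivWithinAt
  · exact fun ν _ => by positivity

lemma antitoneOn_besselPhase_order (x : ℝ) :
    AntitoneOn (fun ν => besselPhase ν x) (Icc (-x) x) := by
  refine antitoneOn_of_hasDerivWithinAt_nonpos (f' := fun ν => -arccos (ν / x)) (convex_Icc _ _)
    (continuous_besselPhase_order x).continuousOn ?_ ?_ <;> rw [interior_Icc]
  · exact fun ν hν => (hasDerivAt_besselPhase_order hν).hasDerivWithinAt
  · exact fun ν _ => neg_nonpos.2 (arccos_nonneg _)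

lemma besselPhase_nonneg (hx : 0 < x) (hν : ν ∈ Icc (-x) x) : 0 ≤ besselPhase ν x := by
  rw [← besselPhase_self hx]
  exact antitoneOn_besselPhase_order x hν ⟨by linarith, le_rfl⟩ hν.2

lemma besselPhase_sub_arccos_mul_le {r z : ℝ} (hr : r ∈ Ioo (-x) x) (hz : z ∈ Icc (-x) x) :
    besselPhase r x - arccos (r / x) * (z - r) ≤ besselPhase z x := by
  have hconv := convexOn_besselPhase_order x
  have hderiv := hasDerivAt_besselPhase_order hr
  rcases lt_trichotomy z r with hzr | rfl | hrz
  · have hslope := hconv.slope_le_of_hasDerivAt hz (Ioo_subset_Icc_self hr) hzr hderiv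
    rw [slope_def_field, div_le_iff₀ (sub_pos.2 hzr)] at hslope
    linarith
  · simp
  · have hslope := hconv.le_slope_of_hasDerivAt (Ioo_subset_Icc_self hr) hz hrz hderiv
    rw [slope_def_field, le_div_iff₀ (sub_pos.2 hrz)] at hslope
    linarith

lemma integral_besselPhase (hx : 0 < x) : ∫ ν in (0 : ℝ)..x, besselPhase ν x = π * x ^ 2 / 8 := by
  have : Continuous fun ν : ℝ => arcsin (ν / x) :=
    continuous_arcsin.comp (continuous_id.div_const x)
  have : Continuous fun ν : ℝ => arccos (ν / x) :=
    continuous_arccos.comp (continuous_id.div_const x)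
  have hderiv : ∀ ν ∈ Ioo 0 x, HasDerivAt
      (fun ν => 3 / 4 * (ν * √(x ^ 2 - ν ^ 2)) + x ^ 2 / 4 * arcsin (ν / x) -
        1 / 2 * (ν ^ 2 * arccos (ν / x))) (besselPhase ν x) ν := by
    intro ν hν
    have hν' : ν ∈ Ioo (-x) x := ⟨by linarith [hν.1], hν.2⟩
    have hsqrt := sqrt_pos.2 (sq_sub_sq_pos hν')
    have hsq := sq_sqrt (sq_sub_sq_pos hν').le
    refine (((((hasDerivAt_id ν).mul (hasDerivAt_sqrt_sq_sub_sq hν')).const_mul (3 / 4)).add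
      ((hasDerivAt_arcsin_div hν').const_mul (x ^ 2 / 4))).sub
      (((hasDerivAt_pow 2 ν).mul (hasDerivAt_arccos_div hν')).const_mul (1 / 2))).congr_deriv ?_
    simp only [besselPhase, id]
    push_cast
    field_simp
    linear_combination (-2) * hsq
  rw [intervalIntegral.integral_eq_sub_of_hasDerivAt_of_le hx.le
    (Continuous.continuousOn (by fun_prop)) hderiv
    ((continuous_besselPhase_order x).intervalIntegrable _ _)]
  simp [div_self hx.ne']
  ring

end PhaseInOrder

/-! ### The counting function of the zeros is bounded by the phase -/

section CountingBound

variable {ν x z : ℝ}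

lemma tendsto_cos_of_besselJ_eq_zero {ι : Type*} {l : Filter ι} {c : ι → ℝ} (hν : -(1 / 2) < ν)
    (hc : Tendsto c l atTop) (hJ : ∀ i, besselJ ν (c i) = 0) :
    Tendsto (fun i => cos (c i - ν * (π / 2) - π / 4)) l (𝓝 0) := by
  obtain ⟨C, hC, hasymp⟩ := exists_tendsto_sqrt_mul_besselJ hν
  have hlim := (hasymp.comp hc).div_const (-C)
  rw [zero_div] at hlim
  refine hlim.congr fun i => ?_
  rw [Function.comp_apply, hJ, mul_zero, zero_sub, neg_div_neg_eq, mul_div_cancel_left₀ _ hC]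

lemma sin_le_abs_sin_of_mem_Icc {η w : ℝ} (hη : 0 ≤ η) {n : ℤ}
    (hw : w ∈ Icc (n * π + η) (n * π + π - η)) : sin η ≤ |sin w| := by
  have hn : |sin w| = |sin (w - n * π)| := by
    rw [sin_sub_int_mul_pi, abs_mul, abs_neg_one_zpow, one_mul]
  rw [hn]
  refine le_trans ?_ (le_abs_self _)
  rcases le_total (w - n * π) (π / 2) with h | h
  · exact sin_le_sin_of_le_of_le_pi_div_two (by linarith [pi_pos]) h (by linarith [hw.1])
  · rw [← sin_pi_sub (w - n * π)]
    exact sin_le_sin_of_le_of_le_pi_div_two (by linarith [pi_pos]) (by linarith)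
      (by linarith [hw.2])

lemma not_tendsto_sin_of_mem_Icc {ι : Type*} {l : Filter ι} [l.NeBot] {η : ℝ} {w : ι → ℝ}
    {n : ι → ℤ} (hη : 0 < η) (hw : ∀ᶠ i in l, w i ∈ Icc (n i * π + η) (n i * π + π - η)) :
    ¬Tendsto (fun i => sin (w i)) l (𝓝 0) := fun hlim => by
  obtain ⟨i, hi⟩ := hw.exists
  have hη_lt : η < π := by linarith [hi.1, hi.2]
  have hlim_abs := hlim.abs
  rw [abs_zero] at hlim_abs
  exact (sin_pos_of_pos_of_lt_pi hη hη_lt).not_ge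
    (ge_of_tendsto hlim_abs (hw.mono fun i hi => sin_le_abs_sin_of_mem_Icc hη.le hi))

lemma tendsto_atTop_of_le_besselZeroCount {c : ℕ → ℝ} (hν : -1 < ν)
    (hc : ∀ m, m ≤ besselZeroCount ν (c m)) : Tendsto c atTop atTop :=
  tendsto_atTop.2 fun X => by
    filter_upwards [eventually_gt_atTop (besselZeroCount ν X)] with m hm
    by_contra! hcX
    exact (hm.trans_le (hc m)).not_ge (besselZeroCount_mono hν hcX.le)

lemma besselZeroCount_add_one_le_of_lt {c : ℝ} (hν : -1 < ν) (hz : 0 ≤ z) (hzc : z < c)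
    (hJ : besselJ ν c = 0) : besselZeroCount ν z + 1 ≤ besselZeroCount ν c := by
  have hmem : c ∉ besselZeroSet ν z := fun h => h.1.2.not_gt hzc
  rw [besselZeroCount, besselZeroCount, ← ncard_insert_of_notMem hmem (finite_besselZeroSet hν z)]
  refine ncard_le_ncard (insert_subset ⟨⟨hz.trans_lt hzc, le_rfl⟩, hJ⟩ fun w hw => ?_)
    (finite_besselZeroSet hν c)
  exact ⟨⟨hw.1.1, hw.1.2.trans hzc.le⟩, hw.2⟩

lemma exists_besselJ_eq_zero_add_le_besselZeroCount (hν : 0 ≤ ν) (hz : 0 < z)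
    (hJ : besselJ ν z = 0) (m : ℕ) :
    ∃ c, 0 < c ∧ besselJ ν c = 0 ∧ besselZeroCount ν z + m ≤ besselZeroCount ν c ∧
      besselPhase ν c ≤ besselPhase ν z + m * π := by
  induction m with
  | zero => exact ⟨z, hz, hJ, le_rfl, by simp⟩
  | succ m ih =>
    obtain ⟨c, hc, hJc, hcount, hphase⟩ := ih
    obtain ⟨d, hcd, hJd, hphase'⟩ := exists_besselJ_eq_zero_besselPhase_le hν hc hJc
    have hcount' := besselZeroCount_add_one_le_of_lt (by linarith) hc.le hcd hJd
    refine ⟨d, hc.trans hcd, hJd, by omega, ?_⟩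
    push_cast
    linarith

/-- A crude bound on the counting function of the zeros: it misses the asymptotics
`x / π - ν / 2 + 1 / 4` of `N_ν` at the zeros themselves by strictly less than one. -/
def HasBesselZeroBound (ν : ℝ) : Prop :=
  ∃ ε > 0, ∀ᶠ x in atTop, besselZeroCount ν x ≤ x / π - ν / 2 + 5 / 4 - ε

/-- The crude bound pins `c m / π - ν / 2 + 1 / 4`, for the zeros `c m` following `z`, to a window
away from the integers; the cosine asymptotics forbids this as soon as `c m → ∞`. -/
lemma HasBesselZeroBound.besselZeroCount_le_of_eq_zero (hb : HasBesselZeroBound ν) (hν : 0 ≤ ν)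
    (hz : 0 < z) (hJ : besselJ ν z = 0) :
    besselZeroCount ν z ≤ besselPhase ν z / π + 1 / 4 := by
  by_contra! hlt
  obtain ⟨δ, hδ, hcrude⟩ := hb
  choose c hc hJc hcount hphase using exists_besselJ_eq_zero_add_le_besselZeroCount hν hz hJ
  set N := besselZeroCount ν z
  set w : ℕ → ℝ := fun m => c m - ν * (π / 2) + π / 4 with hw
  have hc_top := tendsto_atTop_of_le_besselZeroCount (by linarith)
    fun m => le_add_self.trans (hcount m)
  have hsin : Tendsto (fun m => sin (w m)) atTop (𝓝 0) := by
    refine (tendsto_cos_of_besselJ_eq_zero (by linarith) hc_top hJc).congr fun m => ?_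
    rw [← cos_sub_pi_div_two]
    congr 1
    ring
  set ε := N * π - besselPhase ν z - π / 4 with hε
  have hε_pos : 0 < ε := by
    have := mul_lt_mul_of_pos_right hlt pi_pos
    rw [add_mul, div_mul_cancel₀ _ pi_ne_zero] at this
    linarith
  have hupper (m : ℕ) : w m ≤ (N + m) * π - ε := by
    have := sub_le_besselPhase hν (lt_of_besselJ_eq_zero hν (hc m) (hJc m))
    simp only [hw, hε]
    linarith [hphase m]
  have hlower : ∀ᶠ m in atTop, (N + m) * π - π + δ * π ≤ w m := by
    filter_upwards [hc_top.eventually hcrude] with m hm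
    have hN : (N + m : ℝ) ≤ besselZeroCount ν (c m) := by exact_mod_cast hcount m
    have hmul := mul_le_mul_of_nonneg_right (hN.trans hm) pi_pos.le
    have hexpand : (c m / π - ν / 2 + 5 / 4 - δ) * π = w m + π - δ * π := by
      simp only [hw]
      field_simp
      ring
    linarith
  refine not_tendsto_sin_of_mem_Icc (lt_min hε_pos (mul_pos hδ pi_pos))
    (n := fun m : ℕ => N + m - 1) ?_ hsin
  filter_upwards [hlower] with m hm
  have hmin_left := min_le_left ε (δ * π)
  have hmin_right := min_le_right ε (δ * π)
  constructor <;> push_cast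
  · linarith
  · linarith [hupper m]

lemma HasBesselZeroBound.besselZeroCount_le (hb : HasBesselZeroBound ν) (hν : 0 ≤ ν)
    (hx : ν < x) : besselZeroCount ν x ≤ besselPhase ν x / π + 1 / 4 := by
  have hfin := finite_besselZeroSet (by linarith : -1 < ν) x
  rcases (besselZeroSet ν x).eq_empty_or_nonempty with hempty | hne
  · have := besselPhase_nonneg (hν.trans_lt hx) ⟨by linarith, hx.le⟩
    rw [besselZeroCount, hempty, ncard_empty, Nat.cast_zero]
    positivity
  · obtain ⟨z, hz, hmax⟩ := exists_max_image _ id hfin hne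
    have hsub : besselZeroSet ν x ⊆ besselZeroSet ν z :=
      fun w hw => ⟨⟨hw.1.1, hmax w hw⟩, hw.2⟩
    have hνz := lt_of_besselJ_eq_zero hν hz.1.1 hz.2
    calc (besselZeroCount ν x : ℝ) ≤ besselZeroCount ν z := by
          exact_mod_cast ncard_le_ncard hsub (finite_besselZeroSet (by linarith) z)
      _ ≤ besselPhase ν z / π + 1 / 4 := hb.besselZeroCount_le_of_eq_zero hν hz.1.1 hz.2
      _ ≤ besselPhase ν x / π + 1 / 4 := by
          gcongr
          exact monotoneOn_besselPhase hν hνz hx hz.1.2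

lemma HasBesselZeroBound.add_one (hb : HasBesselZeroBound ν) (hν : 0 ≤ ν) :
    HasBesselZeroBound (ν + 1) := by
  have hlim : Tendsto (fun x => ν * arccos (ν / x)) atTop (𝓝 (ν * (π / 2))) := by
    have hratio : Tendsto (fun x : ℝ => ν / x) atTop (𝓝 0) :=
      tendsto_const_nhds.div_atTop tendsto_id
    have := (continuous_arccos.tendsto 0).comp hratio
    rw [arccos_zero] at this
    exact this.const_mul ν
  refine ⟨1 / 4, by norm_num, ?_⟩
  filter_upwards [eventually_gt_atTop ν, hlim.eventually_const_le
    (show ν * (π / 2) - π / 4 < ν * (π / 2) by linarith [pi_pos])] with x hx harccos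
  have hsqrt : √(x ^ 2 - ν ^ 2) ≤ x :=
    sqrt_le_iff.2 ⟨hν.trans hx.le, by linarith [sq_nonneg ν]⟩
  have hcount : (besselZeroCount (ν + 1) x : ℝ) ≤ besselZeroCount ν x := by
    exact_mod_cast besselZeroCount_add_one_le (by linarith) x
  calc (besselZeroCount (ν + 1) x : ℝ) ≤ besselPhase ν x / π + 1 / 4 :=
        hcount.trans (hb.besselZeroCount_le hν hx)
    _ ≤ (x - (ν * (π / 2) - π / 4)) / π + 1 / 4 := by
        gcongr
        rw [besselPhase]
        linarith
    _ = x / π - (ν + 1) / 2 + 5 / 4 - 1 / 4 := by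
        field_simp
        ring

lemma hasBesselZeroBound_of_le (hν : 0 ≤ ν) (hν' : ν ≤ 3 / 2) : HasBesselZeroBound ν := by
  rcases lt_or_ge ν (1 / 2) with h | h
  · refine ⟨1 / 4 - ν / 2, by linarith, ?_⟩
    filter_upwards [eventually_ge_atTop 0] with x hx
    have hbound := (le_div_iff₀ pi_pos).2 (besselZeroCount_mul_pi_le
      (by linarith : 1 / 2 ≤ ν + 1) hx)
    have hstep : (besselZeroCount ν x : ℝ) ≤ besselZeroCount (ν + 1) x + 1 := by
      exact_mod_cast besselZeroCount_le_add_one (by linarith) x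
    linarith
  · refine ⟨1 / 2, by norm_num, ?_⟩
    filter_upwards [eventually_ge_atTop 0] with x hx
    have := (le_div_iff₀ pi_pos).2 (besselZeroCount_mul_pi_le h hx)
    linarith

lemma hasBesselZeroBound (hν : 0 ≤ ν) : HasBesselZeroBound ν := by
  obtain ⟨n, hn⟩ := exists_nat_ge ν
  induction n generalizing ν with
  | zero => exact hasBesselZeroBound_of_le hν (by push_cast at hn; linarith)
  | succ n ih =>
    rcases le_total ν 1 with h | h
    · exact hasBesselZeroBound_of_le hν (by linarith)
    · push_cast at hn
      have := (ih (by linarith : 0 ≤ ν - 1) (by linarith)).add_one (by linarith)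
      rwa [sub_add_cancel] at this

theorem besselZeroCount_le_besselPhase (hν : 0 ≤ ν) (hx : ν < x) :
    besselZeroCount ν x ≤ besselPhase ν x / π + 1 / 4 :=
  (hasBesselZeroBound hν).besselZeroCount_le hν hx

end CountingBound

/-! ### Shifted lattice points under a graph with shallow tangents -/

section LatticePoints

variable {α b : ℝ} {g : ℝ → ℝ}

/-- At every `r ∈ [0, b)` the graph of `g` over `[0, b]` lies above a line through `(r, g r)` that
decreases with slope at most `1 / 2`, and strictly less than `1 / 2` unless `r = 0`. This is what
makes the lattice points under the graph fewer than its area predicts. -/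
def HasShallowTangents (g : ℝ → ℝ) (b : ℝ) : Prop :=
  ∀ r ∈ Ico 0 b, ∃ c ∈ Ioc (0 : ℝ) (1 / 2), (0 < r → c < 1 / 2) ∧
    ∀ z ∈ Icc 0 b, g r - c * (z - r) ≤ g z

/-- The length of `[0, t] ∩ [k, k + 1]`: integrating `layer (g z) k` in `z` gives the area of the
part of the subgraph of `g` between the heights `k` and `k + 1`. -/
def layer (t : ℝ) (k : ℕ) : ℝ := max 0 (min 1 (t - k))

lemma layer_nonneg (t : ℝ) (k : ℕ) : 0 ≤ layer t k := le_max_left _ _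

lemma min_le_layer (t : ℝ) (k : ℕ) : min 1 (t - k) ≤ layer t k := le_max_right _ _

lemma sum_range_layer {t : ℝ} (ht : 0 ≤ t) (n : ℕ) :
    ∑ k ∈ Finset.range n, layer t k = min t n := by
  induction n with
  | zero => simp [ht]
  | succ n ih =>
    rw [Finset.sum_range_succ, ih, layer]
    push_cast
    grind

lemma continuous_layer_comp (hg : Continuous g) (k : ℕ) : Continuous fun z => layer (g z) k := by
  unfold layer
  fun_prop

lemma card_le_two_mul_add_one {r : ℝ} (hr : 0 ≤ r) {s : Finset ℤ}
    (hs : ∀ i ∈ s, |(i : ℝ) - α| ≤ r) : (s.card : ℝ) ≤ 2 * r + 1 := by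
  have hsub : s ⊆ Finset.Icc ⌈α - r⌉ ⌊α + r⌋ := fun i hi => by
    have h := abs_le.1 (hs i hi)
    exact Finset.mem_Icc.2 ⟨Int.ceil_le.2 (by linarith), Int.le_floor.2 (by linarith)⟩
  have hcard : (s.card : ℤ) ≤ max (⌊α + r⌋ + 1 - ⌈α - r⌉) 0 := by
    rw [← Int.ofNat_toNat, ← Int.card_Icc]
    exact_mod_cast Finset.card_le_card hsub
  have hcard' : (s.card : ℝ) ≤ max (⌊α + r⌋ + 1 - ⌈α - r⌉ : ℝ) 0 := by exact_mod_cast hcard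
  exact hcard'.trans (max_le (by linarith [Int.floor_le (α + r), Int.le_ceil (α - r)])
    (by linarith))

lemma add_triangle_le_integral {a c e : ℝ} {ψ : ℝ → ℝ} (hψ : Continuous ψ) (ha : 0 ≤ a)
    (hae : a ≤ e) (heb : e ≤ b) (hψ_one : ∀ z ∈ Ioo 0 a, 1 ≤ ψ z)
    (hψ_line : ∀ z ∈ Icc a e, c * (e - z) ≤ ψ z) (hψ_nonneg : ∀ z ∈ Icc e b, 0 ≤ ψ z) :
    a + c * (e - a) ^ 2 / 2 ≤ ∫ z in (0 : ℝ)..b, ψ z := by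
  have hint (u v : ℝ) : IntervalIntegrable ψ volume u v := hψ.intervalIntegrable u v
  have hline : Continuous fun z => c * (e - z) := by fun_prop
  have harea_one := intervalIntegral.integral_mono_on_of_le_Ioo ha intervalIntegrable_const
    (hint 0 a) hψ_one
  have harea_line := intervalIntegral.integral_mono_on hae (hline.intervalIntegrable a e)
    (hint a e) hψ_line
  have harea_rest := intervalIntegral.integral_nonneg (μ := volume) heb hψ_nonneg
  rw [intervalIntegral.integral_const, smul_eq_mul] at harea_one
  rw [intervalIntegral.integral_const_mul, intervalIntegral.integral_comp_sub_left (fun z => z),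
    integral_id] at harea_line
  rw [← intervalIntegral.integral_add_adjacent_intervals (hint 0 a) (hint a b),
    ← intervalIntegral.integral_add_adjacent_intervals (hint a e) (hint e b)]
  linarith

/-- With `d := 1 / (4 * c) ≥ 1 / 2`, the area under `max 0 (min 1 (3 / 4 - c * (z - r)))` is
`r + d` if `d ≤ r`, and `(r + 3 * d) ^ 2 / (8 * d)` otherwise. -/
lemma add_half_lt_integral {r c : ℝ} {ψ : ℝ → ℝ} (hψ : Continuous ψ) (hr : 0 ≤ r)
    (hc : c ∈ Ioc 0 (1 / 2)) (hcr : 0 < r → c < 1 / 2) (hb : 3 / 4 ≤ c * (b - r))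
    (hψ_nonneg : ∀ z ∈ Icc 0 b, 0 ≤ ψ z)
    (hψ_line : ∀ z ∈ Icc 0 b, min 1 (3 / 4 - c * (z - r)) ≤ ψ z) :
    r + 1 / 2 < ∫ z in (0 : ℝ)..b, ψ z := by
  obtain ⟨hc_pos, hc_le⟩ := hc
  obtain ⟨d, hcd⟩ : ∃ d, c * d = 1 / 4 := ⟨1 / (4 * c), by field_simp⟩
  have hd : 1 / 2 ≤ d := by nlinarith
  have heb : r + 3 * d ≤ b := by nlinarith
  have hline (z : ℝ) : c * (r + 3 * d - z) = 3 / 4 - c * (z - r) := by linear_combination 3 * hcd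
  have hψ_rest : ∀ z ∈ Icc (r + 3 * d) b, 0 ≤ ψ z :=
    fun z hz => hψ_nonneg z ⟨by linarith [hz.1], hz.2⟩
  rcases le_or_gt d r with hdr | hdr
  · have hd_lt : 1 / 2 < d := by nlinarith [hcr (by linarith)]
    have harea := add_triangle_le_integral (a := r - d) (c := c) hψ (by linarith) (by linarith) heb
      (fun z hz => (le_min le_rfl (by nlinarith [hz.2])).trans
        (hψ_line z ⟨hz.1.le, by linarith [hz.2]⟩))
      (fun z hz => (le_min (by nlinarith [hz.1]) (hline z).le).trans
        (hψ_line z ⟨by linarith [hz.1], by linarith [hz.2]⟩)) hψ_rest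
    calc r + 1 / 2 < r + d := by linarith
      _ = r - d + c * (r + 3 * d - (r - d)) ^ 2 / 2 := by linear_combination -8 * d * hcd
      _ ≤ _ := harea
  · have harea := add_triangle_le_integral (a := 0) (c := c) hψ le_rfl (by linarith) heb
      (fun z hz => absurd hz.1 hz.2.not_gt)
      (fun z hz => (le_min (by nlinarith [hz.1]) (hline z).le).trans
        (hψ_line z ⟨hz.1, by linarith [hz.2]⟩)) hψ_rest
    calc r + 1 / 2 ≤ r + d := by linarith
      _ < r + d + c * (d - r) ^ 2 / 2 := by
          have := sub_pos.2 hdr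
          exact lt_add_of_pos_right _ (by positivity)
      _ = 0 + c * (r + 3 * d - 0) ^ 2 / 2 := by linear_combination (-4 * r - 4 * d) * hcd
      _ ≤ _ := harea

lemma card_lt_two_mul_integral_layer (hg : Continuous g) (hgb : g b = 0)
    (htan : HasShallowTangents g b) {k : ℕ} {s : Finset ℤ} (hne : s.Nonempty)
    (hs : ∀ i ∈ s, |(i : ℝ) - α| < b ∧ (k : ℝ) + 3 / 4 ≤ g |(i : ℝ) - α|) :
    (s.card : ℝ) < 2 * ∫ z in (0 : ℝ)..b, layer (g z) k := by
  obtain ⟨i, hi, hmax⟩ := s.exists_max_image (fun i : ℤ => |(i : ℝ) - α|) hne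
  obtain ⟨hib, hik⟩ := hs i hi
  set r := |(i : ℝ) - α|
  have hr : 0 ≤ r := abs_nonneg _
  obtain ⟨c, hc, hcr, hline⟩ := htan r ⟨hr, hib⟩
  have hb : 3 / 4 ≤ c * (b - r) := by
    have := hline b ⟨hr.trans hib.le, le_rfl⟩
    have : (0 : ℝ) ≤ k := k.cast_nonneg
    linarith
  have harea := add_half_lt_integral (continuous_layer_comp hg k) hr hc hcr hb
    (fun z _ => layer_nonneg (g z) k)
    fun z hz => (min_le_min_left 1 (by linarith [hline z hz])).trans (min_le_layer (g z) k)
  linarith [card_le_two_mul_add_one hr hmax]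

/-- The shifted lattice points `(|i - α|, k)` under the graph of `g + 1 / 4` over `[0, b)`. -/
def latticePointsUnder (g : ℝ → ℝ) (b α : ℝ) : Set (ℤ × ℕ) :=
  {p | 1 ≤ p.2 ∧ |(p.1 : ℝ) - α| < b ∧ (p.2 : ℝ) ≤ g |(p.1 : ℝ) - α| + 1 / 4}

lemma finite_latticePointsUnder (htan : HasShallowTangents g b) :
    (latticePointsUnder g b α).Finite := by
  refine ((finite_Icc ⌈α - b⌉ ⌊α + b⌋).prod (finite_Iic ⌊g 0 + 1 / 4⌋₊)).subset fun p hp => ?_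
  obtain ⟨-, hb, hp⟩ := hp
  have hb' := abs_lt.1 hb
  refine ⟨⟨Int.ceil_le.2 (by linarith), Int.le_floor.2 (by linarith)⟩, Nat.le_floor ?_⟩
  have hr := abs_nonneg ((p.1 : ℝ) - α)
  obtain ⟨c, hc, -, hline⟩ := htan _ ⟨hr, hb⟩
  have := hline 0 ⟨le_rfl, hr.trans hb.le⟩
  nlinarith [hc.1]

lemma HasShallowTangents.integral_pos (htan : HasShallowTangents g b) (hb : 0 < b)
    (hg : Continuous g) (hg_nonneg : ∀ z ∈ Icc 0 b, 0 ≤ g z) : 0 < ∫ z in (0 : ℝ)..b, g z := by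
  obtain ⟨c, hc, -, hline⟩ := htan (b / 2) ⟨by linarith, by linarith⟩
  refine intervalIntegral.integral_pos hb hg.continuousOn
    (fun z hz => hg_nonneg z (Ioc_subset_Icc_self hz)) ⟨0, ⟨le_rfl, hb.le⟩, ?_⟩
  have := mul_pos hc.1 (half_pos hb)
  linarith [hline 0 ⟨le_rfl, hb.le⟩, hg_nonneg (b / 2) ⟨by linarith, by linarith⟩]

lemma card_fiber_lt_two_mul_integral_layer (hg : Continuous g) (hgb : g b = 0)
    (htan : HasShallowTangents g b) {S : Finset (ℤ × ℕ)} (hS : ↑S ⊆ latticePointsUnder g b α)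
    {k : ℕ} (hne : {p ∈ S | p.2 - 1 = k}.Nonempty) :
    ({p ∈ S | p.2 - 1 = k}.card : ℝ) < 2 * ∫ z in (0 : ℝ)..b, layer (g z) k := by
  have hinj : InjOn Prod.fst (({p ∈ S | p.2 - 1 = k} : Finset (ℤ × ℕ)) : Set (ℤ × ℕ)) := by
    intro p hp q hq h
    obtain ⟨hpS, hpk⟩ := Finset.mem_filter.1 hp
    obtain ⟨hqS, hqk⟩ := Finset.mem_filter.1 hq
    exact Prod.ext h (by have := (hS hpS).1; have := (hS hqS).1; omega)
  rw [← Finset.card_image_of_injOn hinj]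
  refine card_lt_two_mul_integral_layer (α := α) hg hgb htan (hne.image _) fun i hi => ?_
  obtain ⟨p, hp, rfl⟩ := Finset.mem_image.1 hi
  obtain ⟨hpS, rfl⟩ := Finset.mem_filter.1 hp
  obtain ⟨hp_one, hpb, hpg⟩ := hS hpS
  refine ⟨hpb, ?_⟩
  rw [Nat.cast_sub hp_one]
  push_cast
  linarith

lemma card_fiber_le_two_mul_integral_layer (hb : 0 ≤ b) (hg : Continuous g) (hgb : g b = 0)
    (htan : HasShallowTangents g b) {S : Finset (ℤ × ℕ)} (hS : ↑S ⊆ latticePointsUnder g b α)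
    (k : ℕ) : ({p ∈ S | p.2 - 1 = k}.card : ℝ) ≤ 2 * ∫ z in (0 : ℝ)..b, layer (g z) k := by
  rcases ({p ∈ S | p.2 - 1 = k}).eq_empty_or_nonempty with hempty | hne
  · rw [hempty, Finset.card_empty, Nat.cast_zero]
    exact mul_nonneg two_pos.le
      (intervalIntegral.integral_nonneg hb fun z _ => layer_nonneg (g z) k)
  · exact (card_fiber_lt_two_mul_integral_layer hg hgb htan hS hne).le

lemma sum_integral_layer_le (hb : 0 ≤ b) (hg : Continuous g)
    (hg_nonneg : ∀ z ∈ Icc 0 b, 0 ≤ g z) (n : ℕ) :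
    ∑ k ∈ Finset.range n, ∫ z in (0 : ℝ)..b, layer (g z) k ≤ ∫ z in (0 : ℝ)..b, g z := by
  have hlayer := continuous_layer_comp hg
  rw [← intervalIntegral.integral_finsetSum fun k _ => (hlayer k).intervalIntegrable 0 b]
  refine intervalIntegral.integral_mono_on hb
    ((continuous_finsetSum _ fun k _ => hlayer k).intervalIntegrable 0 b)
    (hg.intervalIntegrable 0 b) fun z hz => ?_
  rw [sum_range_layer (hg_nonneg z hz)]
  exact min_le_left _ _

theorem ncard_latticePointsUnder_lt (hb : 0 < b) (hg : Continuous g)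
    (hg_nonneg : ∀ z ∈ Icc 0 b, 0 ≤ g z) (hgb : g b = 0) (htan : HasShallowTangents g b) :
    ((latticePointsUnder g b α).ncard : ℝ) < 2 * ∫ z in (0 : ℝ)..b, g z := by
  have hfin := finite_latticePointsUnder (α := α) htan
  rw [ncard_eq_toFinset_card _ hfin]
  set S := hfin.toFinset
  have hS : ↑S ⊆ latticePointsUnder g b α := hfin.coe_toFinset.subset
  rcases S.eq_empty_or_nonempty with hempty | ⟨p, hp⟩
  · rw [hempty, Finset.card_empty, Nat.cast_zero]
    exact mul_pos two_pos (htan.integral_pos hb hg hg_nonneg)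
  set n := S.sup Prod.snd
  have hmaps : ∀ q ∈ S, q.2 - 1 ∈ Finset.range n := fun q hq => by
    have := Finset.le_sup (f := Prod.snd) hq
    have := (hS hq).1
    exact Finset.mem_range.2 (by omega)
  calc (S.card : ℝ) = ∑ k ∈ Finset.range n, ({q ∈ S | q.2 - 1 = k}.card : ℝ) := by
        exact_mod_cast Finset.card_eq_sum_card_fiberwise hmaps
    _ < ∑ k ∈ Finset.range n, 2 * ∫ z in (0 : ℝ)..b, layer (g z) k :=
        Finset.sum_lt_sum
          (fun k _ => card_fiber_le_two_mul_integral_layer hb.le hg hgb htan hS k)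
          ⟨p.2 - 1, hmaps p hp, card_fiber_lt_two_mul_integral_layer hg hgb htan hS
            ⟨p, Finset.mem_filter.2 ⟨hp, rfl⟩⟩⟩
    _ = 2 * ∑ k ∈ Finset.range n, ∫ z in (0 : ℝ)..b, layer (g z) k := (Finset.mul_sum _ _ _).symm
    _ ≤ 2 * ∫ z in (0 : ℝ)..b, g z := by
        gcongr
        exact sum_integral_layer_le hb.le hg hg_nonneg n

end LatticePoints

/-! ### The enumeration of the zeros -/

section BesselZero

variable {ν x : ℝ}

lemma mul_pos_of_abs_sub_lt {u C : ℝ} (h : |u - C| < |C|) : 0 < C * u := by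
  nlinarith [sq_lt_sq.2 h, sq_nonneg u]

lemma exists_lt_besselJ_eq_zero (hν : 0 ≤ ν) (X : ℝ) : ∃ z, X < z ∧ besselJ ν z = 0 := by
  obtain ⟨C, hC, hasymp⟩ := exists_tendsto_sqrt_mul_besselJ (by linarith : -(1 / 2) < ν)
  have hclose : ∀ᶠ t in atTop, |√t * besselJ ν t - C * cos (t - ν * (π / 2) - π / 4)| < |C| := by
    simpa only [dist_zero_right, norm_eq_abs] using Metric.tendsto_nhds.1 hasymp |C| (abs_pos.2 hC)
  obtain ⟨Y, hY⟩ := eventually_atTop.1 hclose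
  obtain ⟨n, hn⟩ := exists_nat_gt (max X Y)
  have hmax : max X Y < n * (2 * π) := by
    nlinarith [pi_gt_three, (n.cast_nonneg : (0 : ℝ) ≤ n)]
  set a := ν * (π / 2) + π / 4 + n * (2 * π)
  have hνπ : 0 ≤ ν * (π / 2) := by positivity
  have hna : n * (2 * π) < a := by simp only [a]; linarith [pi_pos]
  have hXa : X < a := by linarith [le_max_left X Y]
  have hYa : Y ≤ a := by linarith [le_max_right X Y]
  have hpos : 0 < C * besselJ ν a := by
    have h := hY a hYa
    rw [show a - ν * (π / 2) - π / 4 = n * (2 * π) by ring, cos_nat_mul_two_pi, mul_one] at h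
    have := mul_pos_of_abs_sub_lt h
    rw [mul_left_comm] at this
    exact pos_of_mul_pos_right this (sqrt_nonneg a)
  have hneg : C * besselJ ν (a + π) < 0 := by
    have h := hY (a + π) (by linarith [pi_pos])
    rw [show a + π - ν * (π / 2) - π / 4 = n * (2 * π) + π by ring, cos_add_pi,
      cos_nat_mul_two_pi, mul_neg_one, ← abs_neg C] at h
    have := mul_pos_of_abs_sub_lt h
    rw [mul_left_comm] at this
    linarith [pos_of_mul_pos_right this (sqrt_nonneg (a + π))]
  obtain ⟨z, hz, hJz⟩ := intermediate_value_Icc' (by linarith [pi_pos] : a ≤ a + π)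
    ((continuous_besselJ hν).const_mul C).continuousOn ⟨hneg.le, hpos.le⟩
  exact ⟨z, hXa.trans_le hz.1, (mul_eq_zero.1 hJz).resolve_left hC⟩

lemma sInf_besselJ_eq_zero_mem (hν : 0 ≤ ν) (hx : 0 ≤ x) :
    sInf {z | x < z ∧ besselJ ν z = 0} ∈ {z | x < z ∧ besselJ ν z = 0} := by
  obtain ⟨w, hw⟩ := exists_lt_besselJ_eq_zero hν x
  have hfin : ({z | x < z ∧ besselJ ν z = 0} ∩ Iic w).Finite :=
    (finite_besselZeroSet (by linarith) w).subset
      fun z hz => ⟨⟨hx.trans_lt hz.1.1, hz.2⟩, hz.1.2⟩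
  obtain ⟨y, hy, hmin⟩ := exists_min_image _ id hfin ⟨w, hw, self_mem_Iic⟩
  refine IsLeast.csInf_mem ⟨hy.1, fun z hz => ?_⟩
  rcases le_total z w with hzw | hwz
  · exact hmin z ⟨hz, hzw⟩
  · exact hy.2.trans hwz

lemma besselZero_nonneg (hν : 0 ≤ ν) (k : ℕ) : 0 ≤ besselZero ν k := by
  induction k with
  | zero => exact le_rfl
  | succ k ih => exact ih.trans (sInf_besselJ_eq_zero_mem hν ih).1.le

lemma le_besselZeroCount_besselZero (hν : 0 ≤ ν) (k : ℕ) :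
    k ≤ besselZeroCount ν (besselZero ν k) := by
  induction k with
  | zero => exact Nat.zero_le _
  | succ k ih =>
    have hk := besselZero_nonneg hν k
    obtain ⟨hlt, hJ⟩ := sInf_besselJ_eq_zero_mem hν hk
    exact (Nat.succ_le_succ ih).trans
      (besselZeroCount_add_one_le_of_lt (by linarith) hk hlt hJ)

lemma lt_and_le_besselPhase_of_besselZero_le (hν : 0 ≤ ν) {k : ℕ} (hk : 1 ≤ k)
    (hx : besselZero ν k ≤ x) : ν < x ∧ k ≤ besselPhase ν x / π + 1 / 4 := by
  have hcount : k ≤ besselZeroCount ν x :=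
    (le_besselZeroCount_besselZero hν k).trans (besselZeroCount_mono (by linarith) hx)
  have hνx : ν < x := by
    by_contra! h
    have := besselZeroCount_eq_zero hν h
    omega
  exact ⟨hνx, (Nat.cast_le.2 hcount).trans (besselZeroCount_le_besselPhase hν hνx)⟩

end BesselZero

lemma hasShallowTangents_besselPhase {x : ℝ} (hx : 0 < x) :
    HasShallowTangents (fun ν => besselPhase ν x / π) x := by
  intro r hr
  have hrx : r / x < 1 := (div_lt_one hx).2 hr.2
  refine ⟨arccos (r / x) / π, ⟨div_pos (arccos_pos.2 hrx) pi_pos, ?_⟩, fun hr_pos => ?_,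
    fun z hz => ?_⟩
  · rw [div_le_iff₀ pi_pos]
    linarith [arccos_le_pi_div_two.2 (div_nonneg hr.1 hx.le)]
  · rw [div_lt_iff₀ pi_pos]
    linarith [arccos_lt_pi_div_two.2 (div_pos hr_pos hx)]
  · have htangent := besselPhase_sub_arccos_mul_le (r := r) ⟨by linarith [hr.1], hr.2⟩
      ⟨by linarith [hz.1], hz.2⟩
    calc besselPhase r x / π - arccos (r / x) / π * (z - r)
        = (besselPhase r x - arccos (r / x) * (z - r)) / π := by ring
      _ ≤ besselPhase z x / π := by gcongr

theorem polya_dirichlet_AB_disk_general (α : ℝ) {lam : ℝ} (hlam : 0 < lam) :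
    {p : ℤ × ℕ | 1 ≤ p.2 ∧ besselZero |(p.1 : ℝ) - α| p.2 ≤ lam}.Finite ∧
      ({p : ℤ × ℕ | 1 ≤ p.2 ∧ besselZero |(p.1 : ℝ) - α| p.2 ≤ lam}.ncard : ℝ) < lam ^ 2 / 4 := by
  set g : ℝ → ℝ := fun ν => besselPhase ν lam / π
  have hsub : {p : ℤ × ℕ | 1 ≤ p.2 ∧ besselZero |(p.1 : ℝ) - α| p.2 ≤ lam} ⊆
      latticePointsUnder g lam α :=
    fun p hp => ⟨hp.1, lt_and_le_besselPhase_of_besselZero_le (abs_nonneg _) hp.1 hp.2⟩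
  have htan : HasShallowTangents g lam := hasShallowTangents_besselPhase hlam
  have hfin := finite_latticePointsUnder (α := α) htan
  refine ⟨hfin.subset hsub, ?_⟩
  calc _ ≤ ((latticePointsUnder g lam α).ncard : ℝ) := by
        exact_mod_cast ncard_le_ncard hsub hfin
    _ < 2 * ∫ ν in (0 : ℝ)..lam, g ν :=
        ncard_latticePointsUnder_lt hlam ((continuous_besselPhase_order lam).div_const π)
          (fun ν hν => div_nonneg (besselPhase_nonneg hlam ⟨by linarith [hν.1], hν.2⟩) pi_pos.le)
          (by simp only [g, besselPhase_self hlam, zero_div]) htan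
    _ = lam ^ 2 / 4 := by
        rw [intervalIntegral.integral_div, integral_besselPhase hlam]
        field_simp
        norm_num

/-- Pólya's inequality for the Dirichlet Aharonov–Bohm eigenvalues of the unit disk. -/
theorem polya_dirichlet_AB_disk (α : ℝ) (hα : α ∈ Set.Icc (0:ℝ) (1/2)) (lam : ℝ)
    (hlam : 0 < lam) :
    (({p : ℤ × ℕ | 1 ≤ p.2 ∧ besselZero |(p.1 : ℝ) - α| p.2 ≤ lam}.ncard : ℝ))
      < lam^2 / 4 :=
  (polya_dirichlet_AB_disk_general α hlam).2
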